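/- arXiv:1404.7379 — 5 statements merged into one kernel-verified Lean document; each statement's English description precedes it below -/
import Mathlib

section
/- Division theorem (normal form) for free modules over a field with valuation: Let f be a nonzero homogeneous element of K[x₁,…,xₙ]^d and let g₁,…,g_s be nonzero homogeneous elements of K[x₁,…,xₙ]^d. Then there exist polynomials h₁,…,h_s ∈ K[x₁,…,xₙ] and an element r ∈ K[x₁,…,xₙ]^d such that f = h₁g₁ + ⋯ + h_s g_s + r, such that in_{w,≺}(hᵢgᵢ) ≥ in_{w,≺}(f) in the term order for every i with hᵢgᵢ ≠ 0, such that in_{w,≺}(r) ≥ in_{w,≺}(f) in the term order if r ≠ 0, and such that no term of r is divisible by in_{w,≺}(gᵢ) for any i ∈ {1,…,s}. -/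
open MvPolynomial

/-- A (real-valued, additive) valuation on a field `K`:
`v(ab) = v(a)+v(b)` for nonzero `a,b`, `v(a+b) ≥ min(v a, v b)`, and `v a = ∞ ↔ a = 0`. -/
structure ValOn (K : Type*) [Field K] where
  v : K → WithTop ℝ
  v_mul : ∀ a b : K, a ≠ 0 → b ≠ 0 → v (a * b) = v a + v b
  v_add_min : ∀ a b : K, min (v a) (v b) ≤ v (a + b)
  v_eq_top_iff : ∀ a : K, v a = ⊤ ↔ a = 0

/-- A module monomial `x^u·e_k` of `R[x₁,…,xₙ]^d`, recorded as the pair `(u, k)`. -/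
abbrev MMon (n d : ℕ) := (Fin n →₀ ℕ) × Fin d

/-- A term `c·x^u·e_k`, recorded as `(c, (u, k))`. -/
abbrev Term (R : Type*) (n d : ℕ) := R × MMon n d

/-- The strict order on module monomials induced by the monomial order `mo`:
`x^α·e_i ≺ x^β·e_j` iff `x^α ≺ x^β`, or `x^α = x^β` and `i < j`. -/
def mmLt {n d : ℕ} (mo : MonomialOrder (Fin n)) (a b : MMon n d) : Prop :=
  mo.toSyn a.1 < mo.toSyn b.1 ∨ (a.1 = b.1 ∧ a.2 < b.2)

/-- The dot product `w·u` of a weight vector with an exponent vector. -/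
def wdot {n : ℕ} (w : Fin n → ℝ) (u : Fin n →₀ ℕ) : ℝ := ∑ i, w i * (u i : ℝ)

/-- The weight `ν(c) + w·u` of a term `c·x^u·e_k`. -/
def twt {R : Type*} {n d : ℕ} (ν : R → WithTop ℝ) (w : Fin n → ℝ) (t : Term R n d) :
    WithTop ℝ :=
  ν t.1 + (wdot w t.2.1 : ℝ)

/-- The term (pre)order: `c·x^u·e_i ≤ c'·x^{u'}·e_j` iff `ν(c) + w·u < ν(c') + w·u'`, or
they are equal and `x^u·e_i ⪰ x^{u'}·e_j` (smaller terms are "more initial"). -/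
def termLE {R : Type*} {n d : ℕ} (ν : R → WithTop ℝ) (w : Fin n → ℝ)
    (mo : MonomialOrder (Fin n)) (t t' : Term R n d) : Prop :=
  twt ν w t < twt ν w t' ∨
    (twt ν w t = twt ν w t' ∧ (mmLt mo t'.2 t.2 ∨ t.2 = t'.2))

/-- The coefficient of `f ∈ R[x₁,…,xₙ]^d` at the module monomial `m = (u, k)`. -/
def coeffM {R : Type*} [CommSemiring R] {n d : ℕ} (f : Fin d → MvPolynomial (Fin n) R)
    (m : MMon n d) : R :=
  coeff m.1 (f m.2)

/-- `t` is the initial term `in_{w,≺}(f)` of `f`: it is a term of `f` which is least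
in the term order among all terms of `f`. -/
def IsInit {R : Type*} [CommSemiring R] {n d : ℕ} (ν : R → WithTop ℝ) (w : Fin n → ℝ)
    (mo : MonomialOrder (Fin n)) (f : Fin d → MvPolynomial (Fin n) R) (t : Term R n d) : Prop :=
  t.1 ≠ 0 ∧ coeffM f t.2 = t.1 ∧
    ∀ m : MMon n d, coeffM f m ≠ 0 → termLE ν w mo t (coeffM f m, m)

/-- The term `c·x^u·e_k` as an element of `R[x₁,…,xₙ]^d`. -/
noncomputable def termEl {R : Type*} [CommSemiring R] {n d : ℕ} (t : Term R n d) :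
    Fin d → MvPolynomial (Fin n) R :=
  Pi.single t.2.2 (monomial t.2.1 t.1)

/-- The initial submodule `in_{w,≺}(I)`: the submodule generated by the initial terms of
the nonzero elements of `I`. -/
noncomputable def inSub {R : Type*} [CommRing R] {n d : ℕ} (ν : R → WithTop ℝ)
    (w : Fin n → ℝ) (mo : MonomialOrder (Fin n))
    (I : Submodule (MvPolynomial (Fin n) R) (Fin d → MvPolynomial (Fin n) R)) :
    Submodule (MvPolynomial (Fin n) R) (Fin d → MvPolynomial (Fin n) R) :=
  Submodule.span _ {g | ∃ f ∈ I, f ≠ 0 ∧ ∃ t : Term R n d, IsInit ν w mo f t ∧ g = termEl t}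

/-- `f ∈ R[x₁,…,xₙ]^d` is homogeneous (of some degree `δ`). -/
def IsHomog {R : Type*} [CommSemiring R] {n d : ℕ} (f : Fin d → MvPolynomial (Fin n) R) : Prop :=
  ∃ δ : ℕ, ∀ m : MMon n d, coeffM f m ≠ 0 → (∑ i, m.1 i) = δ

namespace DivAux

variable {K : Type*} [Field K]

lemma v_mul' (V : ValOn K) (a b : K) : V.v (a * b) = V.v a + V.v b := by
  by_cases ha : a = 0
  · subst ha
    have := (V.v_eq_top_iff 0).2 rfl
    simp [this]
  by_cases hb : b = 0
  · subst hb
    have := (V.v_eq_top_iff 0).2 rfl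
    simp [this]
  exact V.v_mul a b ha hb

lemma v_one (V : ValOn K) : V.v 1 = 0 := by
  have h := v_mul' V 1 1
  have h1 : V.v 1 ≠ ⊤ := fun h => one_ne_zero ((V.v_eq_top_iff 1).1 h)
  lift V.v 1 to ℝ using h1 with x hx
  rw [mul_one, ← hx] at h
  norm_cast at h ⊢
  linarith

lemma v_neg_one (V : ValOn K) : V.v (-1) = 0 := by
  have h := v_mul' V (-1) (-1)
  have h1 : V.v (-1) ≠ ⊤ := fun h => (neg_ne_zero.2 one_ne_zero) ((V.v_eq_top_iff (-1)).1 h)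
  rw [neg_mul_neg, mul_one, v_one] at h
  lift V.v (-1) to ℝ using h1 with x hx
  norm_cast at h ⊢
  linarith

lemma v_neg (V : ValOn K) (a : K) : V.v (-a) = V.v a := by
  have := v_mul' V (-1) a
  rw [v_neg_one, zero_add] at this
  simpa using this

variable {n d : ℕ}

/-- Linear-order key of a term. -/
noncomputable def key (V : ValOn K) (w : Fin n → ℝ) (mo : MonomialOrder (Fin n))
    (t : Term K n d) : WithTop ℝ ×ₗ (mo.syn ×ₗ Fin d)ᵒᵈ :=
  toLex (twt V.v w t, OrderDual.toDual (toLex (mo.toSyn t.2.1, t.2.2)))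

lemma termLE_iff (V : ValOn K) (w : Fin n → ℝ) (mo : MonomialOrder (Fin n))
    (t t' : Term K n d) : termLE V.v w mo t t' ↔ key V w mo t ≤ key V w mo t' := by
  unfold termLE key mmLt
  rw [Prod.Lex.toLex_le_toLex]
  simp only [OrderDual.toDual_le_toDual, Prod.Lex.toLex_le_toLex, EmbeddingLike.apply_eq_iff_eq]
  refine or_congr Iff.rfl (and_congr Iff.rfl ?_)
  rw [Prod.ext_iff]
  constructor
  · rintro ((h | ⟨h, h'⟩) | ⟨h, h'⟩)
    · exact Or.inl h
    · exact Or.inr ⟨h, h'.le⟩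
    · exact Or.inr ⟨h.symm, h'.symm.le⟩
  · rintro (h | ⟨h, h'⟩)
    · exact Or.inl (Or.inl h)
    · rcases h'.lt_or_eq with h' | h'
      · exact Or.inl (Or.inr ⟨h, h'⟩)
      · exact Or.inr ⟨h.symm, h'.symm⟩

lemma key_mon (V : ValOn K) (w : Fin n → ℝ) (mo : MonomialOrder (Fin n))
    (t t' : Term K n d) (h : key V w mo t = key V w mo t') : t.2 = t'.2 := by
  unfold key at h
  have h2 := (Prod.ext_iff.1 (toLex.injective h)).2
  have h3 := toLex.injective (OrderDual.toDual.injective h2)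
  have := Prod.ext_iff.1 h3
  exact Prod.ext (mo.toSyn.injective this.1) this.2

lemma key_same (V : ValOn K) (w : Fin n → ℝ) (mo : MonomialOrder (Fin n))
    (a b : K) (m : MMon n d) : key V w mo (a, m) ≤ key V w mo (b, m) ↔ V.v a ≤ V.v b := by
  unfold key
  rw [Prod.Lex.toLex_le_toLex]
  simp only [twt, le_refl, and_true]
  rw [← le_iff_lt_or_eq]
  exact WithTop.add_le_add_iff_right WithTop.coe_ne_top

lemma key_same_lt (V : ValOn K) (w : Fin n → ℝ) (mo : MonomialOrder (Fin n))
    (a b : K) (m : MMon n d) : key V w mo (a, m) < key V w mo (b, m) ↔ V.v a < V.v b := by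
  rw [← not_le, key_same, not_le]

lemma key_lt_zero (V : ValOn K) (w : Fin n → ℝ) (mo : MonomialOrder (Fin n))
    (a : K) (ha : a ≠ 0) (m m' : MMon n d) : key V w mo (a, m) < key V w mo (0, m') := by
  unfold key
  rw [Prod.Lex.toLex_lt_toLex]
  left
  have h0 := (V.v_eq_top_iff 0).2 rfl
  have h1 : V.v a ≠ ⊤ := fun h => ha ((V.v_eq_top_iff a).1 h)
  simp only [twt, h0, WithTop.top_add]
  rw [lt_top_iff_ne_top]
  simp [h1]

lemma key_scale (V : ValOn K) (w : Fin n → ℝ) (mo : MonomialOrder (Fin n))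
    (a : K) (c c' : K) (m m' : MMon n d) (u : Fin n →₀ ℕ) (ha : a ≠ 0)
    (h : key V w mo (c, m) ≤ key V w mo (c', m')) :
    key V w mo (a * c, (u + m.1, m.2)) ≤ key V w mo (a * c', (u + m'.1, m'.2)) := by
  have h1 : V.v a ≠ ⊤ := fun h => ha ((V.v_eq_top_iff a).1 h)
  have hw : ∀ (c : K) (m : MMon n d), twt V.v w (a * c, ((u + m.1, m.2) : MMon n d)) =
      (V.v a + (wdot w u : ℝ)) + twt V.v w (c, m) := by
    intro c m
    have : wdot w (u + m.1) = wdot w u + wdot w m.1 := by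
      simp [wdot, mul_add, Finset.sum_add_distrib]
    simp only [twt, v_mul', this, WithTop.coe_add]
    ac_rfl
  have hne : V.v a + (wdot w u : ℝ) ≠ ⊤ := by simp [h1]
  unfold key at h ⊢
  rw [Prod.Lex.toLex_le_toLex] at h ⊢
  simp only [hw]
  rcases h with h | ⟨h, h'⟩
  · left
    exact (WithTop.add_lt_add_iff_left hne).2 h
  · right
    refine ⟨congrArg _ h, ?_⟩
    simp only [OrderDual.toDual_le_toDual, Prod.Lex.toLex_le_toLex, map_add,
      EmbeddingLike.apply_eq_iff_eq, add_lt_add_iff_left, add_right_inj] at h' ⊢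
    exact h'

lemma v_sum_lt (V : ValOn K) {ι : Type*} (S : Finset ι) (c : ι → K) (x : WithTop ℝ)
    (hx : x < ⊤) (h : ∀ i ∈ S, x < V.v (c i)) : x < V.v (∑ i ∈ S, c i) := by
  classical
  induction S using Finset.induction_on with
  | empty => simpa [(V.v_eq_top_iff 0).2 rfl] using hx
  | insert i S hi ih =>
    rw [Finset.sum_insert hi]
    refine lt_of_lt_of_le (lt_min ?_ ?_) (V.v_add_min _ _)
    · exact h i (Finset.mem_insert_self _ _)
    · exact ih fun j hj => h j (Finset.mem_insert_of_mem hj)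

lemma key_sum_le (V : ValOn K) (w : Fin n → ℝ) (mo : MonomialOrder (Fin n))
    {ι : Type*} (S : Finset ι) (c : ι → K) (a : K) (ha : a ≠ 0) (m m' : MMon n d)
    (h : ∀ i ∈ S, key V w mo (a, m) ≤ key V w mo (c i, m')) :
    key V w mo (a, m) ≤ key V w mo (∑ i ∈ S, c i, m') := by
  classical
  induction S using Finset.induction_on with
  | empty => simpa using (key_lt_zero V w mo a ha m m').le
  | insert i S hi ih =>
    rw [Finset.sum_insert hi]
    have h1 := h i (Finset.mem_insert_self _ _)
    have h2 := ih fun j hj => h j (Finset.mem_insert_of_mem hj)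
    have h3 := V.v_add_min (c i) (∑ i ∈ S, c i)
    rcases min_le_iff.1 h3 with h3 | h3
    · exact h1.trans ((key_same V w mo _ _ _).2 h3)
    · exact h2.trans ((key_same V w mo _ _ _).2 h3)

lemma core (V : ValOn K) (w : Fin n → ℝ) (mo : MonomialOrder (Fin n))
    (S : Finset (MMon n d)) (q : MMon n d → MMon n d → K)
    (hq0 : ∀ m, q m m ≠ 0)
    (hq : ∀ m m', key V w mo (q m m, m) ≤ key V w mo (q m m', m'))
    (a : MMon n d → K) (ha : ∃ m ∈ S, a m ≠ 0) :
    ∃ m0 ∈ S, (∑ m ∈ S, a m * q m m0) ≠ 0 ∧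
      ∀ m ∈ S, ∀ m', key V w mo (∑ m ∈ S, a m * q m m0, m0) ≤ key V w mo (a m * q m m', m') := by
  classical
  obtain ⟨m1, hm1, ha1⟩ := ha
  obtain ⟨m0, hm0, hmin⟩ := S.exists_min_image (fun m => key V w mo (a m * q m m, m)) ⟨m1, hm1⟩
  have hne : a m0 * q m0 m0 ≠ 0 := by
    intro h0
    have := hmin m1 hm1
    simp only [h0] at this
    exact absurd this (not_le.2 (key_lt_zero V w mo _ (mul_ne_zero ha1 (hq0 m1)) _ _))
  have hstep : ∀ m m', key V w mo (a m * q m m, m) ≤ key V w mo (a m * q m m', m') ∨ a m = 0 := by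
    intro m m'
    by_cases h : a m = 0
    · exact Or.inr h
    · left
      simpa using key_scale V w mo (a m) _ _ m m' 0 h (hq m m')
  have hall : ∀ m ∈ S, ∀ m', key V w mo (a m0 * q m0 m0, m0) ≤ key V w mo (a m * q m m', m') := by
    intro m hm m'
    rcases hstep m m' with h | h
    · exact (hmin m hm).trans h
    · rw [h, zero_mul]
      exact (key_lt_zero V w mo _ hne _ _).le
  have hlt : ∀ m ∈ S.erase m0, V.v (a m0 * q m0 m0) < V.v (a m * q m m0) := by
    intro m hm
    obtain ⟨hmne, hm⟩ := Finset.mem_erase.1 hm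
    rw [← key_same_lt V w mo _ _ m0]
    rcases hstep m m0 with h | h
    · refine lt_of_lt_of_le (lt_of_le_of_ne (hmin m hm) ?_) h
      intro he
      exact hmne (key_mon V w mo _ _ he).symm
    · rw [h, zero_mul]
      exact key_lt_zero V w mo _ hne _ _
  have htop : V.v (a m0 * q m0 m0) < ⊤ :=
    lt_top_iff_ne_top.2 fun h => hne ((V.v_eq_top_iff _).1 h)
  have hsum := v_sum_lt V _ _ _ htop hlt
  have hle : V.v (∑ m ∈ S, a m * q m m0) ≤ V.v (a m0 * q m0 m0) := by
    by_contra hcon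
    rw [not_le] at hcon
    have h1 := V.v_add_min (∑ m ∈ S, a m * q m m0) (-(∑ m ∈ S.erase m0, a m * q m m0))
    rw [v_neg, ← Finset.add_sum_erase S _ hm0, add_neg_cancel_right] at h1
    rw [Finset.add_sum_erase S (fun m => a m * q m m0) hm0] at h1
    exact absurd h1 (not_le.2 (lt_min hcon hsum))
  refine ⟨m0, hm0, ?_, ?_⟩
  · intro h0
    rw [h0, (V.v_eq_top_iff 0).2 rfl] at hle
    exact absurd htop (not_lt.2 hle)
  · intro m hm m'
    exact ((key_same V w mo _ _ m0).2 hle).trans (hall m hm m')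

lemma solve (V : ValOn K) (w : Fin n → ℝ) (mo : MonomialOrder (Fin n))
    (S : Finset (MMon n d)) (q : MMon n d → MMon n d → K)
    (hq0 : ∀ m, q m m ≠ 0)
    (hq : ∀ m m', key V w mo (q m m, m) ≤ key V w mo (q m m', m'))
    (F : MMon n d → K) :
    ∃ a : MMon n d → K, ∀ m' ∈ S, F m' = ∑ m ∈ S, a m * q m m' := by
  classical
  let M : Matrix S S K := fun m' m => q m m'
  have hinj : Function.Injective (Matrix.mulVecLin M) := by
    rw [injective_iff_map_eq_zero]
    intro a ha
    by_contra hne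
    obtain ⟨m1, hm1⟩ := Function.ne_iff.1 hne
    let a' : MMon n d → K := fun m => if h : m ∈ S then a ⟨m, h⟩ else 0
    obtain ⟨m0, hm0, h0, -⟩ := core V w mo S q hq0 hq a' ⟨m1, m1.2, by simpa [a'] using hm1⟩
    apply h0
    have : (Matrix.mulVec M a) ⟨m0, hm0⟩ = 0 := congrFun ha ⟨m0, hm0⟩
    rw [← Finset.sum_coe_sort S]
    simpa [Matrix.mulVec, dotProduct, M, a', mul_comm] using this
  obtain ⟨a, ha⟩ := (LinearMap.injective_iff_surjective.1 hinj) (fun m => F m)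
  refine ⟨fun m => if h : m ∈ S then a ⟨m, h⟩ else 0, fun m' hm' => ?_⟩
  have : (Matrix.mulVec M a) ⟨m', hm'⟩ = F m' := congrFun ha ⟨m', hm'⟩
  rw [← Finset.sum_coe_sort S]
  simpa [Matrix.mulVec, dotProduct, M, mul_comm] using this.symm

lemma coeffM_smul (u : Fin n →₀ ℕ) (g : Fin d → MvPolynomial (Fin n) K) (m : MMon n d) :
    coeffM ((monomial u (1 : K)) • g) m = if u ≤ m.1 then coeffM g (m.1 - u, m.2) else 0 := by
  simp [coeffM, coeff_monomial_mul']

lemma isInit_key (V : ValOn K) (w : Fin n → ℝ) (mo : MonomialOrder (Fin n))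
    (g : Fin d → MvPolynomial (Fin n) K) (t : Term K n d) (h : IsInit V.v w mo g t)
    (m : MMon n d) : key V w mo t ≤ key V w mo (coeffM g m, m) := by
  by_cases h0 : coeffM g m = 0
  · rw [h0]
    exact (key_lt_zero V w mo t.1 h.1 t.2 m).le
  · exact (termLE_iff V w mo _ _).1 (h.2.2 m h0)

lemma pieces (V : ValOn K) (w : Fin n → ℝ) (mo : MonomialOrder (Fin n)) {s : ℕ}
    (g : Fin s → Fin d → MvPolynomial (Fin n) K) (hghom : ∀ i, IsHomog (g i)) (m : MMon n d) :
    ∃ (e : Fin s → MvPolynomial (Fin n) K) (ρ q : Fin d → MvPolynomial (Fin n) K),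
      q = ∑ i, e i • g i + ρ ∧
      (∀ i m', coeffM (e i • g i) m' = 0 ∨ coeffM (e i • g i) m' = coeffM q m') ∧
      (∀ m', coeffM ρ m' = 0 ∨ coeffM ρ m' = coeffM q m') ∧
      (∀ m', coeffM ρ m' ≠ 0 → ∀ i, ∀ t : Term K n d,
        IsInit V.v w mo (g i) t → ¬ (t.2.2 = m'.2 ∧ t.2.1 ≤ m'.1)) ∧
      coeffM q m ≠ 0 ∧
      (∀ m', key V w mo (coeffM q m, m) ≤ key V w mo (coeffM q m', m')) ∧
      (∀ m', coeffM q m' ≠ 0 → ∑ i, m'.1 i = ∑ i, m.1 i) := by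
  classical
  by_cases hex : ∃ i, ∃ t : Term K n d, IsInit V.v w mo (g i) t ∧ t.2.2 = m.2 ∧ t.2.1 ≤ m.1
  · obtain ⟨i, t, ht, h2, h1⟩ := hex
    obtain ⟨u, hu⟩ : ∃ u, m.1 = u + t.2.1 := ⟨m.1 - t.2.1, (tsub_add_cancel_of_le h1).symm⟩
    have hm : m = (u + t.2.1, t.2.2) := Prod.ext hu h2.symm
    have hqm : coeffM ((monomial u (1 : K)) • g i) m = t.1 := by
      rw [coeffM_smul, hm]
      simp [ht.2.1]
    refine ⟨Pi.single i (monomial u 1), 0, (monomial u (1 : K)) • g i, ?_, ?_, ?_, ?_, ?_, ?_, ?_⟩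
    · rw [Finset.sum_eq_single i]
      · simp
      · intro j _ hj
        simp [hj]
      · simp
    · intro j m'
      by_cases hj : j = i
      · subst hj
        simp
      · left
        simp [hj, coeffM]
    · intro m'
      simp [coeffM]
    · intro m' h
      simp [coeffM] at h
    · rw [hqm]
      exact ht.1
    · intro m'
      rw [hqm, coeffM_smul]
      split_ifs with h
      · have := key_scale V w mo 1 _ _ _ _ u one_ne_zero
          (isInit_key V w mo (g i) t ht (m'.1 - u, m'.2))
        simpa [← hm, add_tsub_cancel_of_le h] using this
      · exact (key_lt_zero V w mo t.1 ht.1 _ _).le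
    · intro m' h
      rw [coeffM_smul] at h
      split_ifs at h with hle
      · obtain ⟨δ, hδ⟩ := hghom i
        have e1 := hδ _ h
        have e2 := hδ t.2 (by rw [ht.2.1]; exact ht.1)
        have e3 : m'.1 = u + (m'.1 - u) := (add_tsub_cancel_of_le hle).symm
        rw [e3, hu]
        simp only [Finsupp.add_apply, Finset.sum_add_distrib]
        rw [e2, e1]
      · exact absurd rfl h
  · have hc : ∀ m', coeffM (termEl ((1 : K), m)) m' = if m = m' then 1 else 0 := by
      intro m'
      unfold coeffM termEl
      by_cases h2 : m'.2 = m.2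
      · simp only [h2, Pi.single_eq_same, coeff_monomial]
        simp [Prod.ext_iff, h2]
      · have : m ≠ m' := fun h => h2 (by rw [h])
        simp [h2, this]
    refine ⟨0, termEl (1, m), termEl (1, m), ?_, ?_, ?_, ?_, ?_, ?_, ?_⟩
    · simp
    · intro i m'
      left
      simp [coeffM]
    · intro m'
      exact Or.inr rfl
    · intro m' h i t ht hd
      rw [hc] at h
      have : m = m' := by
        by_contra hne
        simp [hne] at h
      subst this
      exact hex ⟨i, t, ht, hd⟩
    · rw [hc]
      simp
    · intro m'
      rw [hc, hc]
      by_cases h : m = m'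
      · subst h
        simp
      · simp only [h, if_true, if_false]
        exact (key_lt_zero V w mo 1 one_ne_zero _ _).le
    · intro m' h
      rw [hc] at h
      have : m = m' := by
        by_contra hne
        simp [hne] at h
      rw [this]

lemma finite_deg (D : ℕ) : {m : MMon n d | ∑ i, m.1 i = D}.Finite := by
  have h : (Set.Iic (Finsupp.equivFunOnFinite.symm (fun _ : Fin n => D)) ×ˢ
      (Set.univ : Set (Fin d))).Finite := (Set.finite_Iic _).prod Set.finite_univ
  refine h.subset ?_
  intro m hm
  refine ⟨?_, trivial⟩
  intro i
  have hm' : ∑ i, m.1 i = D := hm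
  simp only [Finsupp.equivFunOnFinite_symm_apply_apply]
  rw [← hm']
  exact Finset.single_le_sum (f := fun i => m.1 i) (fun _ _ => Nat.zero_le _) (Finset.mem_univ i)

lemma coeffM_sum_smul {ι : Type*} (S : Finset ι) (a : ι → K)
    (p : ι → Fin d → MvPolynomial (Fin n) K) (m : MMon n d) :
    coeffM (∑ j ∈ S, a j • p j) m = ∑ j ∈ S, a j * coeffM (p j) m := by
  simp [coeffM, Finset.sum_apply, coeff_sum, coeff_smul]

lemma ext_coeffM {p q : Fin d → MvPolynomial (Fin n) K}
    (h : ∀ m, coeffM p m = coeffM q m) : p = q := by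
  funext k
  ext u
  exact h (u, k)

end DivAux

/-- **Division theorem (normal form) for free modules over a field with valuation.**
Given a nonzero homogeneous `f` and nonzero homogeneous `g₁,…,g_s` in `K[x₁,…,xₙ]^d`,
there are `h₁,…,h_s ∈ K[x₁,…,xₙ]` and `r ∈ K[x₁,…,xₙ]^d` with `f = Σ hᵢgᵢ + r`,
`in_{w,≺}(hᵢgᵢ) ≥ in_{w,≺}(f)` whenever `hᵢgᵢ ≠ 0`, `in_{w,≺}(r) ≥ in_{w,≺}(f)` if `r ≠ 0`,
and no term of `r` divisible by any `in_{w,≺}(gᵢ)`. -/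
theorem division_theorem_module {K : Type*} [Field K] {n d : ℕ}
    (V : ValOn K) (w : Fin n → ℝ) (mo : MonomialOrder (Fin n)) {s : ℕ}
    (f : Fin d → MvPolynomial (Fin n) K) (hf : f ≠ 0) (hfhom : IsHomog f)
    (g : Fin s → Fin d → MvPolynomial (Fin n) K)
    (hg : ∀ i, g i ≠ 0) (hghom : ∀ i, IsHomog (g i)) :
    ∃ (h : Fin s → MvPolynomial (Fin n) K) (r : Fin d → MvPolynomial (Fin n) K),
      f = (∑ i, h i • g i) + r ∧
      (∀ i, h i • g i ≠ 0 → ∀ t t' : Term K n d,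
        IsInit V.v w mo f t → IsInit V.v w mo (h i • g i) t' → termLE V.v w mo t t') ∧
      (r ≠ 0 → ∀ t t' : Term K n d,
        IsInit V.v w mo f t → IsInit V.v w mo r t' → termLE V.v w mo t t') ∧
      (∀ m : MMon n d, coeffM r m ≠ 0 → ∀ i, ∀ t : Term K n d,
        IsInit V.v w mo (g i) t → ¬ (t.2.2 = m.2 ∧ t.2.1 ≤ m.1)) := by
  classical
  obtain ⟨D, hD⟩ := hfhom
  choose e ρ q hqe he hρ hρd hq0 hq hqD using DivAux.pieces V w mo g hghom
  let S : Finset (MMon n d) := (DivAux.finite_deg (n := n) (d := d) D).toFinset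
  have hS : ∀ m, m ∈ S ↔ ∑ i, m.1 i = D := fun m => by simp [S]
  obtain ⟨a, ha⟩ := DivAux.solve V w mo S (fun m => coeffM (q m)) hq0 hq (coeffM f)
  have ha' : ∀ m', coeffM f m' = ∑ m ∈ S, a m * coeffM (q m) m' := by
    intro m'
    by_cases hm' : m' ∈ S
    · exact ha m' hm'
    · have h1 : coeffM f m' = 0 := by
        by_contra h
        exact hm' ((hS m').2 (hD m' h))
      rw [h1, eq_comm]
      refine Finset.sum_eq_zero fun m hm => ?_
      have : coeffM (q m) m' = 0 := by
        by_contra h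
        exact hm' ((hS m').2 ((hqD m m' h).trans ((hS m).1 hm)))
      rw [this, mul_zero]
  have hfsum : f = ∑ m ∈ S, a m • q m :=
    DivAux.ext_coeffM fun m' => by rw [DivAux.coeffM_sum_smul, ha']
  have hane : ∃ m ∈ S, a m ≠ 0 := by
    by_contra hcon
    push Not at hcon
    apply hf
    rw [hfsum]
    exact Finset.sum_eq_zero fun m hm => by rw [hcon m hm, zero_smul]
  obtain ⟨m0, hm0, hne, hmin⟩ := DivAux.core V w mo S (fun m => coeffM (q m)) hq0 hq a hane
  rw [← ha'] at hne hmin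
  have hgen : ∀ (p : MMon n d → Fin d → MvPolynomial (Fin n) K),
      (∀ m m', coeffM (p m) m' = 0 ∨ coeffM (p m) m' = coeffM (q m) m') →
      ∀ t t' : Term K n d, IsInit V.v w mo f t → IsInit V.v w mo (∑ m ∈ S, a m • p m) t' →
        termLE V.v w mo t t' := by
    intro p hp t t' ht ht'
    rw [DivAux.termLE_iff]
    refine (DivAux.isInit_key V w mo f t ht m0).trans ?_
    have h1 : t' = (coeffM (∑ m ∈ S, a m • p m) t'.2, t'.2) := Prod.ext ht'.2.1.symm rfl
    rw [h1, DivAux.coeffM_sum_smul]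
    refine DivAux.key_sum_le V w mo S _ _ hne _ _ fun m hm => ?_
    rcases hp m t'.2 with h | h
    · rw [h, mul_zero]
      exact (DivAux.key_lt_zero V w mo _ hne _ _).le
    · rw [h]
      exact hmin m hm t'.2
  have hh : ∀ i, (∑ m ∈ S, a m • e m i) • g i = ∑ m ∈ S, a m • (e m i • g i) := by
    intro i
    rw [Finset.sum_smul]
    exact Finset.sum_congr rfl fun m _ => smul_assoc _ _ _
  refine ⟨fun i => ∑ m ∈ S, a m • e m i, ∑ m ∈ S, a m • ρ m, ?_, ?_, ?_, ?_⟩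
  · simp only [hh]
    rw [Finset.sum_comm, ← Finset.sum_add_distrib, hfsum]
    refine Finset.sum_congr rfl fun m _ => ?_
    rw [← Finset.smul_sum, ← smul_add, ← hqe m]
  · intro i _ t t' ht ht'
    simp only [hh] at ht'
    exact hgen (fun m => e m i • g i) (fun m => he m i) t t' ht ht'
  · intro _ t t' ht ht'
    exact hgen ρ hρ t t' ht ht'
  · intro m' hm'
    rw [DivAux.coeffM_sum_smul] at hm'
    obtain ⟨m, _, h⟩ := Finset.exists_ne_zero_of_sum_ne_zero hm'
    exact hρd m m' (right_ne_zero_of_mul h)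
end

section
/- Let V be a finite-dimensional vector space over a field K with valuation v, let v₁,…,v_s ∈ V and w ∈ ℝ^s. Then for every vector x in the K-linear span of {v₁,…,v_s}, there exists c ∈ K^s with Σᵢ cᵢvᵢ = x such that trop(c)(w) is maximal: for every c' ∈ K^s with Σᵢ c'ᵢvᵢ = x one has trop(c')(w) ≤ trop(c)(w). -/
/-- The tropicalization of the linear form `Σᵢ cᵢxᵢ` evaluated at `w`:
`trop(c)(w) = minᵢ (v(cᵢ) + wᵢ)` (with `v(0) = ∞`, so `trop(0)(w) = ∞`). -/
noncomputable def trop {K : Type*} [Field K] (V : ValOn K) {s : ℕ}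
    (c : Fin s → K) (w : Fin s → ℝ) : WithTop ℝ :=
  Finset.univ.inf fun i => V.v (c i) + (w i : ℝ)

theorem ValOn.v_neg_eq {K : Type*} [Field K] (V : ValOn K) (a : K) : V.v (-a) = V.v a := by
  by_cases ha : a = 0
  · simp [ha]
  have h1 := V.v_mul (-a) (-a) (neg_ne_zero.2 ha) (neg_ne_zero.2 ha)
  have h2 := V.v_mul a a ha ha
  rw [neg_mul_neg, h2] at h1
  have t1 : V.v a ≠ ⊤ := fun h => ha ((V.v_eq_top_iff a).1 h)
  have t2 : V.v (-a) ≠ ⊤ := fun h => ha (neg_eq_zero.1 ((V.v_eq_top_iff _).1 h))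
  lift V.v a to ℝ using t1 with r hr
  lift V.v (-a) to ℝ using t2 with q hq
  have h3 : r + r = q + q := by exact_mod_cast h1
  have : q = r := by linarith
  rw [this]

theorem ValOn.v_mul_all {K : Type*} [Field K] (V : ValOn K) (a b : K) :
    V.v (a * b) = V.v a + V.v b := by
  have h0 : V.v 0 = ⊤ := (V.v_eq_top_iff 0).2 rfl
  by_cases ha : a = 0
  · simp [ha, h0]
  by_cases hb : b = 0
  · simp [hb, h0]
  exact V.v_mul a b ha hb

theorem trop_reduce {K : Type*} [Field K] (V : ValOn K) {s : ℕ} (w : Fin s → ℝ)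
    (n : Fin s → K) (i : Fin s) (hi : n i ≠ 0)
    (hmin : ∀ j, V.v (n i) + (w i : ℝ) ≤ V.v (n j) + (w j : ℝ)) (c : Fin s → K) :
    trop V c w ≤ trop V (c + (-(c i / n i)) • n) w := by
  unfold trop
  apply Finset.le_inf
  intro j _
  have hj : Finset.univ.inf (fun i => V.v (c i) + ((w i : ℝ) : WithTop ℝ)) ≤
      V.v (c j) + (w j : ℝ) := Finset.inf_le (Finset.mem_univ j)
  have hii : Finset.univ.inf (fun i => V.v (c i) + ((w i : ℝ) : WithTop ℝ)) ≤
      V.v (c i) + (w i : ℝ) := Finset.inf_le (Finset.mem_univ i)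
  have h2 : V.v (c i) + (w i : ℝ) ≤ V.v (-(c i / n i) * n j) + (w j : ℝ) := by
    have e : V.v (c i) = V.v (-(c i / n i)) + V.v (n i) := by
      rw [← V.v_mul_all, ← V.v_neg_eq (c i)]
      congr 1
      field_simp
    rw [e, V.v_mul_all, add_assoc, add_assoc]
    exact add_le_add_right (hmin j) _
  have h3 := V.v_add_min (c j) (-(c i / n i) * n j)
  calc _ ≤ min (V.v (c j) + ((w j : ℝ) : WithTop ℝ)) (V.v (-(c i / n i) * n j) + (w j : ℝ)) :=
        le_min hj (hii.trans h2)
    _ = min (V.v (c j)) (V.v (-(c i / n i) * n j)) + (w j : ℝ) := (min_add_add_right _ _ _)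
    _ ≤ _ := by
      simp only [Pi.add_apply, Pi.smul_apply, smul_eq_mul]
      gcongr

theorem exists_max_coset {K : Type*} [Field K] (V : ValOn K) {s : ℕ} (w : Fin s → ℝ) :
    ∀ (d : ℕ) (N : Submodule K (Fin s → K)), Module.finrank K N ≤ d → ∀ c0 : Fin s → K,
      ∃ c, c - c0 ∈ N ∧ ∀ c', c' - c0 ∈ N → trop V c' w ≤ trop V c w := by
  intro d
  induction d with
  | zero =>
    intro N hN c0
    have hb : N = ⊥ := Submodule.finrank_eq_zero.1 (Nat.le_zero.1 hN)
    subst hb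
    refine ⟨c0, by simp, fun c' h => ?_⟩
    rw [Submodule.mem_bot, sub_eq_zero] at h
    rw [h]
  | succ d ih =>
    intro N hN c0
    by_cases hb : N = ⊥
    · subst hb
      exact ih ⊥ (by rw [finrank_bot]; exact Nat.zero_le d) c0
    obtain ⟨n, hn, hn0⟩ := Submodule.exists_mem_ne_zero_of_ne_bot hb
    obtain ⟨k, hk⟩ := Function.ne_iff.1 hn0
    obtain ⟨i, -, hmin⟩ := Finset.exists_min_image Finset.univ
      (fun j => V.v (n j) + ((w j : ℝ) : WithTop ℝ)) ⟨k, Finset.mem_univ k⟩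
    have hi : n i ≠ 0 := by
      intro h
      have h1 := hmin k (Finset.mem_univ k)
      simp only [(V.v_eq_top_iff (n i)).2 h, top_add, top_le_iff, WithTop.add_eq_top,
        WithTop.coe_ne_top, or_false] at h1
      exact hk ((V.v_eq_top_iff _).1 h1)
    let N' : Submodule K (Fin s → K) := N ⊓ LinearMap.ker (LinearMap.proj (R := K) (φ := fun _ : Fin s => K) i)
    have hlt : N' < N := by
      refine lt_of_le_of_ne inf_le_left fun h => ?_
      have : n ∈ N' := h ▸ hn
      exact hi (by simpa using this.2)
    have hd : Module.finrank K N' ≤ d := by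
      have := Submodule.finrank_lt_finrank_of_lt hlt
      omega
    obtain ⟨c, hc, hmax⟩ := ih N' hd (c0 + (-(c0 i / n i)) • n)
    refine ⟨c, ?_, fun c' hc' => ?_⟩
    · have := N.add_mem hc.1 (N.smul_mem (-(c0 i / n i)) hn)
      convert this using 1
      abel
    · refine (trop_reduce V w n i hi (fun j => hmin j (Finset.mem_univ j)) c').trans (hmax _ ⟨?_, ?_⟩)
      · have := N.add_mem hc' (N.smul_mem (-(c' i / n i) + (c0 i / n i)) hn)
        have e : c' + -(c' i / n i) • n - (c0 + -(c0 i / n i) • n) =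
            c' - c0 + (-(c' i / n i) + c0 i / n i) • n := by module
        rw [e]
        exact this
      · simp [hi]

/-- **Existence of a representation maximizing the tropicalization.**
Let `V` be a finite-dimensional vector space over a field `K` with valuation, let
`v₁,…,v_s ∈ V` and `w ∈ ℝ^s`. For every `x` in the span of the `vᵢ` there exists
`c ∈ K^s` with `Σᵢ cᵢvᵢ = x` such that `trop(c)(w)` is maximal among all such
representations of `x`. -/
theorem exists_max_trop_representation {K : Type*} [Field K] (Val : ValOn K)
    (M : Type*) [AddCommGroup M] [Module K M] [FiniteDimensional K M]
    {s : ℕ} (v : Fin s → M) (w : Fin s → ℝ)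
    (x : M) (hx : x ∈ Submodule.span K (Set.range v)) :
    ∃ c : Fin s → K, (∑ i, c i • v i) = x ∧
      ∀ c' : Fin s → K, (∑ i, c' i • v i) = x → trop Val c' w ≤ trop Val c w := by
  obtain ⟨c0, hc0⟩ := (Submodule.mem_span_range_iff_exists_fun K).1 hx
  obtain ⟨c, hc, hmax⟩ := exists_max_coset Val w _
    (LinearMap.ker (Fintype.linearCombination K v)) le_rfl c0
  refine ⟨c, ?_, fun c' hc' => hmax c' ?_⟩
  · rw [LinearMap.mem_ker, map_sub, sub_eq_zero] at hc
    simpa [Fintype.linearCombination_apply, hc0] using hc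
  · rw [LinearMap.mem_ker, map_sub, sub_eq_zero]
    simp [Fintype.linearCombination_apply, hc0, hc']
end

section
/- Buchberger criterion for modules over a field with valuation: Let S = {g₁,…,g_s} be a finite set of nonzero elements of K[x₁,…,xₙ]^d and let I be the submodule of K[x₁,…,xₙ]^d generated by S. Suppose that for all i, j such that S-form(gᵢ,gⱼ) is defined and nonzero, the S-form reduces to zero on division by S, i.e., S-form(gᵢ,gⱼ) = Σ_k h_k g_k for some h₁,…,h_s ∈ K[x₁,…,xₙ] with in_{w,≺}(h_k g_k) ≥ in_{w,≺}(S-form(gᵢ,gⱼ)) in the term order for every k with h_k g_k ≠ 0. Then S is a Gröbner basis of I with respect to (w, ≺), i.e., in_{w,≺}(I) is generated by {in_{w,≺}(g₁),…,in_{w,≺}(g_s)}. -/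
open MvPolynomial

/-- The S-form of `f, g` whose initial terms `tf = c·x^α·e_j`, `tg = c'·x^β·e_j` lie in the
same component: `S-form(f,g) = (x^{α⊔β−α}/c)·f − (x^{α⊔β−β}/c')·g`. -/
noncomputable def sForm {K : Type*} [Field K] {n d : ℕ}
    (f g : Fin d → MvPolynomial (Fin n) K) (tf tg : Term K n d) :
    Fin d → MvPolynomial (Fin n) K :=
  (monomial (tf.2.1 ⊔ tg.2.1 - tf.2.1) tf.1⁻¹ : MvPolynomial (Fin n) K) • f -
    (monomial (tf.2.1 ⊔ tg.2.1 - tg.2.1) tg.1⁻¹ : MvPolynomial (Fin n) K) • g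


namespace BuchAux

/-- the `AddValuation` attached to a `ValOn` -/
noncomputable def toAdd {K : Type*} [Field K] (V : ValOn K) : AddValuation K (WithTop ℝ) :=
  AddValuation.of V.v ((V.v_eq_top_iff 0).2 rfl)
    (by
      have h := V.v_mul 1 1 one_ne_zero one_ne_zero
      have h1 : V.v 1 ≠ ⊤ := fun h => one_ne_zero ((V.v_eq_top_iff 1).1 h)
      rw [mul_one] at h
      lift V.v 1 to ℝ using h1 with x hx
      norm_cast at h ⊢
      linarith)
    V.v_add_min
    (by
      intro a b
      by_cases ha : a = 0
      · subst ha; simp [(V.v_eq_top_iff 0).2 rfl]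
      by_cases hb : b = 0
      · subst hb; simp [(V.v_eq_top_iff 0).2 rfl]
      exact V.v_mul a b ha hb)

theorem toAdd_apply {K : Type*} [Field K] (V : ValOn K) (x : K) : toAdd V x = V.v x := rfl

/-- abstract term orders on a free module -/
structure TO (n r : ℕ) (w : Fin n → ℝ) (L : Type*) [LinearOrder L] where
  κ : MMon n r → L
  ω : MMon n r → ℝ
  inj : Function.Injective κ
  mono : ∀ (a b : MMon n r) (α : Fin n →₀ ℕ), κ a < κ b → κ (a.1 + α, a.2) < κ (b.1 + α, b.2)
  le_add : ∀ (a : MMon n r) (α : Fin n →₀ ℕ), κ a ≤ κ (a.1 + α, a.2)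
  ω_add : ∀ (a : MMon n r) (α : Fin n →₀ ℕ), ω (a.1 + α, a.2) = ω a + wdot w α

section gen

variable {K : Type*} [Field K] (V : AddValuation K (WithTop ℝ)) {n r : ℕ} {w : Fin n → ℝ}
  {L : Type*} [LinearOrder L] (O : TO n r w L)

/-- the key of a term -/
noncomputable def tau (c : K) (m : MMon n r) : WithTop ℝ ×ₗ Lᵒᵈ :=
  toLex (V c + (O.ω m : ℝ), OrderDual.toDual (O.κ m))

theorem tau_le {c c' : K} {m m' : MMon n r} : tau V O c m ≤ tau V O c' m' ↔
    V c + (O.ω m : ℝ) < V c' + (O.ω m' : ℝ) ∨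
      (V c + (O.ω m : ℝ) = V c' + (O.ω m' : ℝ) ∧ O.κ m' ≤ O.κ m) := by
  simp [tau, Prod.Lex.toLex_le_toLex]

theorem tau_lt {c c' : K} {m m' : MMon n r} : tau V O c m < tau V O c' m' ↔
    V c + (O.ω m : ℝ) < V c' + (O.ω m' : ℝ) ∨
      (V c + (O.ω m : ℝ) = V c' + (O.ω m' : ℝ) ∧ O.κ m' < O.κ m) := by
  simp [tau, Prod.Lex.toLex_lt_toLex]

theorem tau_eq_mon {c c' : K} {m m' : MMon n r} (h : tau V O c m = tau V O c' m') : m = m' := by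
  simp only [tau, EmbeddingLike.apply_eq_iff_eq, Prod.mk.injEq] at h
  exact O.inj h.2

theorem tau_lt_of_le_of_ne {c c' : K} {m m' : MMon n r} (h : tau V O c m ≤ tau V O c' m')
    (hne : m ≠ m') : tau V O c m < tau V O c' m' :=
  lt_of_le_of_ne h fun h => hne (tau_eq_mon V O h)

theorem V_ne_top {c : K} (hc : c ≠ 0) : V c ≠ ⊤ := (AddValuation.ne_top_iff V).2 hc

theorem tau_lt_zero {c : K} (hc : c ≠ 0) (m m' : MMon n r) : tau V O c m < tau V O 0 m' := by
  rw [tau_lt]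
  left
  have := V_ne_top V hc
  lift V c to ℝ using this with x hx
  simp only [AddValuation.map_zero, WithTop.top_add]
  exact_mod_cast WithTop.coe_lt_top (x + O.ω m)

theorem ne_zero_of_tau_le {c c' : K} (hc : c ≠ 0) {m m' : MMon n r}
    (h : tau V O c' m' ≤ tau V O c m) : c' ≠ 0 := by
  rintro rfl
  exact absurd (tau_lt_zero V O hc m m') (not_lt.2 h)

theorem wt_cancel {x y : WithTop ℝ} (a : ℝ) : x + (a : WithTop ℝ) < y + (a : WithTop ℝ) ↔ x < y := by
  cases x <;> cases y <;> simp [← WithTop.coe_add]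

theorem wt_cancel_le {x y : WithTop ℝ} (a : ℝ) :
    x + (a : WithTop ℝ) ≤ y + (a : WithTop ℝ) ↔ x ≤ y := by
  cases x <;> cases y <;> simp [← WithTop.coe_add]

theorem tau_le_same {c c' : K} {m : MMon n r} : tau V O c m ≤ tau V O c' m ↔ V c ≤ V c' := by
  rw [tau_le, ← wt_cancel_le (O.ω m), le_iff_lt_or_eq (a := V c + _)]
  simp

theorem tau_lt_same {c c' : K} {m : MMon n r} : tau V O c m < tau V O c' m ↔ V c < V c' := by
  rw [← not_le, tau_le_same, not_le]

theorem tau_mul {a b c : K} (hc : c ≠ 0) {m m' : MMon n r} (α : Fin n →₀ ℕ)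
    (h : tau V O a m ≤ tau V O b m') :
    tau V O (c * a) (m.1 + α, m.2) ≤ tau V O (c * b) (m'.1 + α, m'.2) := by
  rw [tau_le] at h ⊢
  have := V_ne_top V hc
  rw [O.ω_add, O.ω_add, AddValuation.map_mul, AddValuation.map_mul]
  lift V c to ℝ using this with x hx
  have e : ∀ (y : WithTop ℝ) (z : ℝ), (x : WithTop ℝ) + y + ((z + wdot w α : ℝ) : WithTop ℝ) =
      (y + (z : WithTop ℝ)) + ((x + wdot w α : ℝ) : WithTop ℝ) := by
    intro y z
    push_cast
    abel
  rw [e, e, wt_cancel]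
  rcases h with h | ⟨h, h2⟩
  · exact Or.inl h
  · right
    refine ⟨by rw [h], ?_⟩
    rcases h2.lt_or_eq with h2 | h2
    · exact (O.mono _ _ α h2).le
    · rw [O.inj h2]

theorem tau_add_lt {γ : WithTop ℝ ×ₗ Lᵒᵈ} {a b : K} {m : MMon n r} (ha : γ < tau V O a m)
    (hb : γ < tau V O b m) : γ < tau V O (a + b) m := by
  rcases AddValuation.map_add' V a b with h | h
  · exact ha.trans_le ((tau_le_same V O).2 h)
  · exact hb.trans_le ((tau_le_same V O).2 h)

theorem tau_add_le {γ : WithTop ℝ ×ₗ Lᵒᵈ} {a b : K} {m : MMon n r} (ha : γ ≤ tau V O a m)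
    (hb : γ ≤ tau V O b m) : γ ≤ tau V O (a + b) m := by
  rcases AddValuation.map_add' V a b with h | h
  · exact ha.trans ((tau_le_same V O).2 h)
  · exact hb.trans ((tau_le_same V O).2 h)

theorem tau_neg (a : K) (m : MMon n r) : tau V O (-a) m = tau V O a m := by
  simp [tau]

theorem tau_sum_lt {γ : WithTop ℝ ×ₗ Lᵒᵈ} {ι : Type*} (s : Finset ι) (f : ι → K) {m : MMon n r}
    (h0 : γ < tau V O 0 m) (h : ∀ i ∈ s, γ < tau V O (f i) m) : γ < tau V O (∑ i ∈ s, f i) m := by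
  classical
  induction s using Finset.induction_on with
  | empty => simpa using h0
  | insert a s ha ih =>
    rw [Finset.sum_insert ha]
    exact tau_add_lt V O (h _ (by simp)) (ih fun i hi => h i (by simp [hi]))

theorem tau_sum_le {γ : WithTop ℝ ×ₗ Lᵒᵈ} {ι : Type*} (s : Finset ι) (f : ι → K) {m : MMon n r}
    (h0 : γ ≤ tau V O 0 m) (h : ∀ i ∈ s, γ ≤ tau V O (f i) m) : γ ≤ tau V O (∑ i ∈ s, f i) m := by
  classical
  induction s using Finset.induction_on with
  | empty => simpa using h0
  | insert a s ha ih =>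
    rw [Finset.sum_insert ha]
    exact tau_add_le V O (h _ (by simp)) (ih fun i hi => h i (by simp [hi]))

theorem tau_dom {a b : K} {m : MMon n r} (h : tau V O a m < tau V O b m) :
    tau V O (a + b) m = tau V O a m := by
  rw [tau_lt_same] at h
  simp only [tau, AddValuation.map_add_eq_of_lt_left V h]

/-- `m` is the initial monomial of `f`. -/
def Ini (f : Fin r → MvPolynomial (Fin n) K) (m : MMon n r) : Prop :=
  coeffM f m ≠ 0 ∧ ∀ m', tau V O (coeffM f m) m ≤ tau V O (coeffM f m') m'

/-- coefficient as a linear map -/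
noncomputable def coeffL (m : MMon n r) : (Fin r → MvPolynomial (Fin n) K) →ₗ[K] K where
  toFun f := coeffM f m
  map_add' f g := by simp [coeffM]
  map_smul' f g := by simp [coeffM]

theorem coeffL_apply (f : Fin r → MvPolynomial (Fin n) K) (m : MMon n r) :
  coeffL m f = coeffM f m := rfl

theorem coeffM_add (f g : Fin r → MvPolynomial (Fin n) K) (m : MMon n r) :
  coeffM (f + g) m = coeffM f m + coeffM g m := (coeffL m).map_add f g

theorem coeffM_sub (f g : Fin r → MvPolynomial (Fin n) K) (m : MMon n r) :
  coeffM (f - g) m = coeffM f m - coeffM g m := (coeffL m).map_sub f g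

theorem coeffM_sum {ι : Type*} (s : Finset ι) (f : ι → Fin r → MvPolynomial (Fin n) K)
    (m : MMon n r) : coeffM (∑ i ∈ s, f i) m = ∑ i ∈ s, coeffM (f i) m :=
  map_sum (coeffL m) f s

theorem ext_coeffM {f g : Fin r → MvPolynomial (Fin n) K} (h : ∀ m, coeffM f m = coeffM g m) :
    f = g := by
  funext k
  ext u
  exact h (u, k)

theorem finite_supp (f : Fin r → MvPolynomial (Fin n) K) : {m | coeffM f m ≠ 0}.Finite := by
  classical
  refine ((Finset.univ.biUnion fun k : Fin r => ((f k).support.image fun u => (u, k)) :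
    Finset (MMon n r)).finite_toSet).subset ?_
  rintro ⟨u, k⟩ h
  simp only [Set.mem_ofPred_eq, coeffM] at h
  simp [h]

theorem exists_ini {f : Fin r → MvPolynomial (Fin n) K} (hf : f ≠ 0) : ∃ m, Ini V O f m := by
  have hne : (finite_supp f).toFinset.Nonempty := by
    by_contra h
    rw [Finset.not_nonempty_iff_eq_empty, Set.Finite.toFinset_eq_empty] at h
    apply hf
    apply ext_coeffM
    intro m
    by_contra h2
    have : m ∈ {m | coeffM f m ≠ 0} := by
      intro h3; apply h2; rw [h3]; simp [coeffM]
    rw [h] at this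
    exact this
  obtain ⟨m, hm, h⟩ := Finset.exists_min_image _ (fun m => tau V O (coeffM f m) m) hne
  simp only [Set.Finite.mem_toFinset, Set.mem_ofPred_eq] at hm h
  refine ⟨m, hm, fun m' => ?_⟩
  by_cases h0 : coeffM f m' = 0
  · rw [h0]; exact (tau_lt_zero V O hm _ _).le
  · exact h m' h0

theorem Ini.unique {f : Fin r → MvPolynomial (Fin n) K} {m m' : MMon n r} (h : Ini V O f m)
    (h' : Ini V O f m') : m = m' :=
  tau_eq_mon V O (le_antisymm (h.2 m') (h'.2 m))

theorem coeffM_mon_smul (α : Fin n →₀ ℕ) (c : K) (f : Fin r → MvPolynomial (Fin n) K)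
    (m : MMon n r) : coeffM ((monomial α c : MvPolynomial (Fin n) K) • f) (m.1 + α, m.2) =
      c * coeffM f m := by
  simp only [coeffM, Pi.smul_apply, smul_eq_mul]
  rw [add_comm, coeff_monomial_mul]

theorem coeffM_mon_smul' (α : Fin n →₀ ℕ) (c : K) (f : Fin r → MvPolynomial (Fin n) K)
    (m : MMon n r) (h : ¬ α ≤ m.1) : coeffM ((monomial α c : MvPolynomial (Fin n) K) • f) m = 0 := by
  simp only [coeffM, Pi.smul_apply, smul_eq_mul]
  rw [coeff_monomial_mul', if_neg h]

theorem Ini.mon_smul {f : Fin r → MvPolynomial (Fin n) K} {m : MMon n r} (h : Ini V O f m)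
    (α : Fin n →₀ ℕ) {c : K} (hc : c ≠ 0) :
    Ini V O ((monomial α c : MvPolynomial (Fin n) K) • f) (m.1 + α, m.2) := by
  have h0 : coeffM ((monomial α c : MvPolynomial (Fin n) K) • f) (m.1 + α, m.2) ≠ 0 := by
    rw [coeffM_mon_smul]; exact mul_ne_zero hc h.1
  refine ⟨h0, fun m' => ?_⟩
  by_cases hm : α ≤ m'.1
  · obtain ⟨u, hu⟩ := exists_add_of_le hm
    have e : m' = (((u, m'.2) : MMon n r).1 + α, ((u, m'.2) : MMon n r).2) := by
      ext1
      · simp [hu, add_comm]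
      · rfl
    rw [e, coeffM_mon_smul, coeffM_mon_smul]
    exact tau_mul V O hc α (h.2 _)
  · rw [coeffM_mon_smul' _ _ _ _ hm]
    exact (tau_lt_zero V O h0 _ _).le

theorem core (J : Finset (MMon n r)) (e : MMon n r → Fin r → MvPolynomial (Fin n) K)
    (he : ∀ m ∈ J, Ini V O (e m) m) (c : MMon n r → K) (hc : ∃ m ∈ J, c m ≠ 0) :
    ∃ m ∈ J, c m ≠ 0 ∧
      (∀ j ∈ J, tau V O (c m * coeffM (e m) m) m ≤ tau V O (c j * coeffM (e j) j) j) ∧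
      tau V O (coeffM (∑ j ∈ J, c j • e j) m) m = tau V O (c m * coeffM (e m) m) m := by
  classical
  obtain ⟨m0, hm0, hc0⟩ := hc
  obtain ⟨m, hm, h⟩ := Finset.exists_min_image J (fun m => tau V O (c m * coeffM (e m) m) m)
    ⟨m0, hm0⟩
  have hne : c m * coeffM (e m) m ≠ 0 :=
    ne_zero_of_tau_le V O (mul_ne_zero hc0 (he m0 hm0).1) (h m0 hm0)
  refine ⟨m, hm, left_ne_zero_of_mul hne, h, ?_⟩
  have hs : ∀ j, coeffM (c j • e j) m = c j * coeffM (e j) m := fun j =>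
    (coeffL m).map_smul (c j) (e j)
  rw [coeffM_sum, ← Finset.add_sum_erase J _ hm, hs]
  apply tau_dom
  apply tau_sum_lt V O _ _ (tau_lt_zero V O hne _ _)
  intro j hj
  rw [hs]
  by_cases hcj : c j = 0
  · rw [hcj, zero_mul]; exact tau_lt_zero V O hne _ _
  have hj' := Finset.mem_of_mem_erase hj
  refine (tau_lt_of_le_of_ne V O (h j hj') (Finset.ne_of_mem_erase hj).symm).trans_le ?_
  have := tau_mul V O hcj 0 ((he j hj').2 m)
  simpa using this

theorem reduce (J : Finset (MMon n r)) (e : MMon n r → Fin r → MvPolynomial (Fin n) K)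
    (he : ∀ m ∈ J, Ini V O (e m) m) (h : Fin r → MvPolynomial (Fin n) K) {mh : MMon n r}
    (hh : Ini V O h mh) :
    ∃ c : MMon n r → K, (∀ m ∈ J, coeffM (h - ∑ j ∈ J, c j • e j) m = 0) ∧
      ∀ m ∈ J, tau V O (coeffM h mh) mh ≤ tau V O (c m * coeffM (e m) m) m := by
  classical
  let Λ : (J → K) →ₗ[K] (J → K) := LinearMap.pi (fun m : J =>
    (coeffL (m : MMon n r)).comp (Fintype.linearCombination K (fun j : J => e j)))
  let ext : (J → K) → MMon n r → K := fun c m => if h : m ∈ J then c ⟨m, h⟩ else 0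
  have hext : ∀ c (m : J), Λ c m = coeffM (∑ j ∈ J, ext c j • e j) m := by
    intro c m
    simp only [Λ, LinearMap.pi_apply, LinearMap.comp_apply, Fintype.linearCombination_apply,
      coeffL_apply]
    congr 1
    rw [← Finset.sum_coe_sort J]
    apply Finset.sum_congr rfl
    intro x _
    simp [ext]
  have hinj : Function.Injective Λ := by
    rw [injective_iff_map_eq_zero]
    intro c hc
    by_contra hne
    obtain ⟨m0, hm0⟩ := Function.ne_iff.1 hne
    obtain ⟨m, hm, hcm, -, h2⟩ := core V O J e he (ext c) ⟨m0, m0.2, by simpa [ext] using hm0⟩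
    rw [← hext c ⟨m, hm⟩, hc] at h2
    exact absurd h2 (tau_lt_zero V O (mul_ne_zero hcm (he m hm).1) _ _).ne'
  obtain ⟨c, hc⟩ := LinearMap.injective_iff_surjective.1 hinj (fun m : J => coeffM h m)
  have hc' : ∀ m ∈ J, coeffM (∑ j ∈ J, ext c j • e j) m = coeffM h m := by
    intro m hm
    rw [← hext c ⟨m, hm⟩, hc]
  refine ⟨ext c, fun m hm => by rw [coeffM_sub, hc' m hm, sub_self], fun m hm => ?_⟩
  by_cases h0 : ∃ m ∈ J, ext c m ≠ 0
  · obtain ⟨m1, hm1, hcm, h1, h2⟩ := core V O J e he (ext c) h0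
    rw [hc' m1 hm1] at h2
    exact ((hh.2 m1).trans h2.le).trans (h1 m hm)
  · push Not at h0
    rw [h0 m hm, zero_mul]
    exact (tau_lt_zero V O hh.1 _ _).le

/-- all terms have positive weight -/
def UP (w : Fin n → ℝ) (p : MvPolynomial (Fin n) K) : Prop :=
  ∀ α, 0 < V (coeff α p) + (wdot w α : ℝ)

theorem UP_zero : UP V w 0 := by
  intro α
  simp

theorem wt_pos_iff {x : WithTop ℝ} {a : ℝ} : 0 < x + (a : WithTop ℝ) ↔ ((-a : ℝ) : WithTop ℝ) < x := by
  cases x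
  · rw [WithTop.top_add]
    exact iff_of_true (WithTop.coe_lt_top 0) (WithTop.coe_lt_top _)
  · norm_cast
    constructor <;> intro h <;> linarith

theorem wt_add_pos {x y : WithTop ℝ} (hx : 0 < x) (hy : 0 < y) : 0 < x + y := by
  cases x <;> cases y <;> simp_all [← WithTop.coe_add]
  norm_cast at *
  linarith

theorem UP.add {p q : MvPolynomial (Fin n) K} (hp : UP V w p) (hq : UP V w q) : UP V w (p + q) := by
  intro α
  have h1 := hp α
  have h2 := hq α
  rw [wt_pos_iff] at *
  rw [coeff_add]
  exact AddValuation.map_lt_add V h1 h2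

theorem UP.neg {p : MvPolynomial (Fin n) K} (hp : UP V w p) : UP V w (-p) := by
  intro α
  rw [coeff_neg, AddValuation.map_neg]
  exact hp α

theorem UP_sum {ι : Type*} (s : Finset ι) (p : ι → MvPolynomial (Fin n) K)
    (h : ∀ i ∈ s, UP V w (p i)) : UP V w (∑ i ∈ s, p i) := by
  classical
  induction s using Finset.induction_on with
  | empty => simpa using UP_zero V
  | insert a s ha ih =>
    rw [Finset.sum_insert ha]
    exact UP.add V (h _ (by simp)) (ih fun i hi => h i (by simp [hi]))

theorem wdot_add (w : Fin n → ℝ) (a b : Fin n →₀ ℕ) : wdot w (a + b) = wdot w a + wdot w b := by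
  simp [wdot, mul_add, Finset.sum_add_distrib]

theorem wdot_zero (w : Fin n → ℝ) : wdot w (0 : Fin n →₀ ℕ) = 0 := by
  simp [wdot]

theorem UP_mon {α : Fin n →₀ ℕ} {c : K} (hc : 0 < V c + (wdot w α : ℝ)) :
    UP V w (monomial α c) := by
  intro β
  rw [coeff_monomial]
  split_ifs with h
  · rwa [← h]
  · simp

theorem UP_mon_mul {α : Fin n →₀ ℕ} {c : K} (hc : 0 < V c + (wdot w α : ℝ))
    {p : MvPolynomial (Fin n) K} (hp : UP V w p) : UP V w (monomial α c * p) := by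
  intro β
  rw [coeff_monomial_mul']
  split_ifs with h
  · obtain ⟨u, rfl⟩ := exists_add_of_le h
    rw [add_tsub_cancel_left, wdot_add, AddValuation.map_mul, WithTop.coe_add,
      add_add_add_comm]
    exact wt_add_pos hc (hp u)
  · simp

theorem UP_mon_mul' {α : Fin n →₀ ℕ} {c : K} (hc : 0 < V c + (wdot w α : ℝ))
    {p : MvPolynomial (Fin n) K} (hp : UP V w (p - 1)) : UP V w (monomial α c * p) := by
  have : monomial α c * p = monomial α c * (p - 1) + monomial α c := by ring
  rw [this]
  exact UP.add V (UP_mon_mul V hc hp) (UP_mon V hc)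

theorem pos_of_tau_lt {a c : K} (ha : a ≠ 0) {m : MMon n r} {α : Fin n →₀ ℕ}
    (h : tau V O a m < tau V O (c * a) (m.1 + α, m.2)) : 0 < V c + (wdot w α : ℝ) := by
  rw [tau_lt] at h
  rcases h with h | ⟨-, h⟩
  · rw [O.ω_add, AddValuation.map_mul] at h
    have := V_ne_top V ha
    lift V a to ℝ using this with x hx
    generalize V c = y at h ⊢
    cases y
    · simp
    · norm_cast at h ⊢
      linarith
  · exact absurd h (not_lt.2 (O.le_add m α))

theorem dickson (X : Set ((Fin n →₀ ℕ) × ℕ)) : ∃ Y : Finset ((Fin n →₀ ℕ) × ℕ), (↑Y ⊆ X) ∧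
    ∀ x ∈ X, ∃ y ∈ Y, y ≤ x := by
  have hf : {x | Minimal (· ∈ X) x}.Finite :=
    WellQuasiOrderedLE.finite_of_isAntichain (setOfPred_minimal_antichain _)
  refine ⟨hf.toFinset, ?_, ?_⟩
  · intro x hx
    simp only [Set.Finite.coe_toFinset] at hx
    exact hx.1
  · intro x hx
    obtain ⟨y, hy, h⟩ := exists_minimal_le_of_wellFoundedLT (· ∈ X) x hx
    exact ⟨y, by simpa using h, hy⟩

theorem finite_deg (D : ℕ) : {m : MMon n r | m.1.degree ≤ D}.Finite := by
  have h : (Set.Iic (Finsupp.equivFunOnFinite.symm (fun _ : Fin n => D))).Finite :=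
    Set.finite_Iic _
  refine (h.prod (Set.finite_univ (α := Fin r))).subset ?_
  rintro ⟨u, k⟩ hu
  refine ⟨?_, trivial⟩
  intro i
  exact (Finsupp.le_degree i u).trans hu

theorem exists_degbound (f : Fin r → MvPolynomial (Fin n) K) :
    ∃ D : ℕ, ∀ m : MMon n r, coeffM f m ≠ 0 → m.1.degree ≤ D := by
  obtain ⟨D, hD⟩ := ((finite_supp f).image fun m => m.1.degree).bddAbove
  exact ⟨D, fun m hm => hD ⟨m, hm, rfl⟩⟩

theorem wnf (N : Submodule (MvPolynomial (Fin n) K) (Fin r → MvPolynomial (Fin n) K))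
    (a : Fin r → MvPolynomial (Fin n) K) :
    ∃ (u : MvPolynomial (Fin n) K) (h : Fin r → MvPolynomial (Fin n) K),
      UP V w (u - 1) ∧ u • a - h ∈ N ∧ ∀ m, Ini V O h m → ∀ s ∈ N, ¬ Ini V O s m := by
  classical
  by_contra hcon
  push Not at hcon
  let A : (Fin r → MvPolynomial (Fin n) K) → Prop := fun h =>
    ∃ u, UP V w (u - 1) ∧ u • a - h ∈ N
  have H : ∀ h, A h → ∃ m, Ini V O h m ∧ ∃ s ∈ N, Ini V O s m := by
    rintro h ⟨u, hu, huN⟩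
    obtain ⟨m, hm, s, hs, hsm⟩ := hcon u h hu huN
    exact ⟨m, hm, s, hs, hsm⟩
  have claim1 : ∀ h m, A h → Ini V O h m → ∃ h' m', A h' ∧ Ini V O h' m' ∧
      tau V O (coeffM h m) m < tau V O (coeffM h' m') m' := by
    intro h m hA hm
    obtain ⟨m2, hm2, s, hs, hsm⟩ := H h hA
    obtain rfl := hm.unique V O hm2
    set c := coeffM h m / coeffM s m with hc
    have hc0 : c ≠ 0 := div_ne_zero hm.1 hsm.1
    have hcm : c * coeffM s m = coeffM h m := div_mul_cancel₀ _ hsm.1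
    have hA' : A (h - (monomial 0 c : MvPolynomial (Fin n) K) • s) := by
      obtain ⟨u, hu, huN⟩ := hA
      refine ⟨u, hu, ?_⟩
      have := N.add_mem huN (N.smul_mem (monomial 0 c) hs)
      convert this using 1
      abel
    obtain ⟨m', hm', -⟩ := H _ hA'
    refine ⟨_, m', hA', hm', ?_⟩
    have hcoef : ∀ x, coeffM (h - (monomial 0 c : MvPolynomial (Fin n) K) • s) x =
        coeffM h x + -(c * coeffM s x) := by
      intro x
      have := coeffM_mon_smul 0 c s x
      simp only [add_zero] at this
      rw [coeffM_sub, this, sub_eq_add_neg]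
    have hne : m ≠ m' := by
      rintro rfl
      apply hm'.1
      rw [hcoef, hcm, add_neg_cancel]
    rw [hcoef]
    apply tau_add_lt
    · exact tau_lt_of_le_of_ne V O (hm.2 m') hne
    · rw [tau_neg, ← hcm]
      apply tau_lt_of_le_of_ne V O _ hne
      simpa using tau_mul V O hc0 0 (hsm.2 m')
  let G : Fin r → (Fin n →₀ ℕ) × ℕ → (Fin r → MvPolynomial (Fin n) K) →
      MvPolynomial (Fin n) K → Prop := fun i q t p =>
    p • a - t ∈ N ∧ (p = 0 ∨ UP V w (p - 1)) ∧ Ini V O t (q.1, i) ∧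
      ∀ m : MMon n r, coeffM t m ≠ 0 → m.1.degree ≤ q.2 + q.1.degree
  let X : Fin r → Set ((Fin n →₀ ℕ) × ℕ) := fun i => {q | ∃ t p, G i q t p}
  choose Y hYX hY using fun i => dickson (X i)
  have hch : ∀ i q, ∃ t p, q ∈ X i → G i q t p := by
    intro i q
    by_cases h : q ∈ X i
    · obtain ⟨t, p, h'⟩ := h
      exact ⟨t, p, fun _ => h'⟩
    · exact ⟨0, 0, fun h' => absurd h' h⟩
  choose T P hTP using hch
  have hZ : ∀ Z : Finset (Σ _ : Fin r, (Fin n →₀ ℕ) × ℕ), (∀ z ∈ Z, z.2 ∈ X z.1) →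
      ∃ h mh, A h ∧ Ini V O h mh ∧ ∀ z ∈ Z, P z.1 z.2 = 0 ∨
        tau V O (coeffM (T z.1 z.2) (z.2.1, z.1)) (z.2.1, z.1) < tau V O (coeffM h mh) mh := by
    intro Z
    induction Z using Finset.induction_on with
    | empty =>
      intro _
      have hA : A a := ⟨1, by simpa using UP_zero V, by simp⟩
      obtain ⟨m, hm, -⟩ := H a hA
      exact ⟨a, m, hA, hm, by simp⟩
    | insert z Z hz ih =>
      intro hX
      obtain ⟨h, mh, hA, hm, hlt⟩ := ih fun z hz => hX z (by simp [hz])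
      have hg := hTP z.1 z.2 (hX z (by simp))
      rcases hg.2.1 with hp | hp
      · refine ⟨h, mh, hA, hm, ?_⟩
        intro z' hz'
        rcases Finset.mem_insert.1 hz' with rfl | hz'
        · exact Or.inl hp
        · exact hlt z' hz'
      · obtain ⟨h', m', hA', hm', hlt'⟩ := claim1 (T z.1 z.2) _ ⟨_, hp, hg.1⟩ hg.2.2.1
        rcases le_total (tau V O (coeffM h mh) mh) (tau V O (coeffM h' m') m') with hle | hle
        · refine ⟨h', m', hA', hm', ?_⟩
          intro z' hz'
          rcases Finset.mem_insert.1 hz' with rfl | hz'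
          · exact Or.inr hlt'
          · exact (hlt z' hz').imp id fun h => h.trans_le hle
        · refine ⟨h, mh, hA, hm, ?_⟩
          intro z' hz'
          rcases Finset.mem_insert.1 hz' with rfl | hz'
          · exact Or.inr (hlt'.trans_le hle)
          · exact hlt z' hz'
  obtain ⟨h, mh, ⟨u, hu, huN⟩, hmh, hlt⟩ := hZ (Finset.univ.sigma Y) (by
    intro z hz
    exact hYX z.1 (Finset.mem_sigma.1 hz).2)
  obtain ⟨D, hD⟩ := exists_degbound h
  let Js : Set (MMon n r) := {m | m.1.degree ≤ D ∧
    ∃ q ∈ Y m.2, q.1 ≤ m.1 ∧ q.2 + m.1.degree ≤ D}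
  have hJf : Js.Finite := (finite_deg D).subset fun m hm => hm.1
  have hq : ∀ m : MMon n r, ∃ q, m ∈ Js → q ∈ Y m.2 ∧ q.1 ≤ m.1 ∧ q.2 + m.1.degree ≤ D := by
    intro m
    by_cases h : m ∈ Js
    · obtain ⟨-, q, hq⟩ := h
      exact ⟨q, fun _ => hq⟩
    · exact ⟨0, fun h' => absurd h' h⟩
  choose q hq using hq
  let e : MMon n r → Fin r → MvPolynomial (Fin n) K := fun m =>
    (monomial (m.1 - (q m).1) 1 : MvPolynomial (Fin n) K) • T m.2 (q m)
  have hGm : ∀ m ∈ Js, G m.2 (q m) (T m.2 (q m)) (P m.2 (q m)) := fun m hm =>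
    hTP _ _ (hYX m.2 (hq m hm).1)
  have hmeq : ∀ m ∈ Js, m = ((q m).1 + (m.1 - (q m).1), m.2) := fun m hm => by
    ext1
    · exact (add_tsub_cancel_of_le (hq m hm).2.1).symm
    · rfl
  have he : ∀ m ∈ hJf.toFinset, Ini V O (e m) m := by
    intro m hm
    have hm := hJf.mem_toFinset.1 hm
    have := (hGm m hm).2.2.1.mon_smul V O (m.1 - (q m).1) (one_ne_zero (α := K))
    rwa [← hmeq m hm] at this
  obtain ⟨c, hc1, hc2⟩ := reduce V O hJf.toFinset e he h hmh
  have hlc : ∀ m ∈ Js, coeffM (e m) m = coeffM (T m.2 (q m)) ((q m).1, m.2) := by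
    intro m hm
    have := coeffM_mon_smul (m.1 - (q m).1) 1 (T m.2 (q m)) ((q m).1, m.2)
    rw [one_mul] at this
    rw [← this]
    simp only
    rw [← hmeq m hm]
  let u' := u - ∑ m ∈ hJf.toFinset, monomial (m.1 - (q m).1) (c m) * P m.2 (q m)
  let h' := h - ∑ j ∈ hJf.toFinset, c j • e j
  have hu' : UP V w (u' - 1) := by
    have : u' - 1 = (u - 1) +
        -∑ m ∈ hJf.toFinset, monomial (m.1 - (q m).1) (c m) * P m.2 (q m) := by
      simp only [u']; ring
    rw [this]
    refine UP.add V hu (UP.neg V (UP_sum V _ _ ?_))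
    intro m hm
    have hmJ := hJf.mem_toFinset.1 hm
    have hG := hGm m hmJ
    rcases hlt ⟨m.2, q m⟩ (by simpa using (hq m hmJ).1) with h0 | hl
    · simp only at h0
      rw [h0, mul_zero]; exact UP_zero V
    · rcases hG.2.1 with h0 | hP
      · rw [h0, mul_zero]; exact UP_zero V
      apply UP_mon_mul' V _ hP
      have h3 := hl.trans_le (hc2 m hm)
      rw [hlc m hmJ] at h3
      simp only at h3
      apply pos_of_tau_lt V O (m := ((q m).1, m.2)) hG.2.2.1.1
      have h4 := hmeq m hmJ
      simp only at h4 ⊢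
      refine lt_of_lt_of_eq h3 ?_
      exact congrArg (tau V O _) h4
  have hN' : u' • a - h' ∈ N := by
    have hsum : ∑ m ∈ hJf.toFinset, (monomial (m.1 - (q m).1) (c m) : MvPolynomial (Fin n) K) •
        (P m.2 (q m) • a - T m.2 (q m)) ∈ N := by
      apply N.sum_mem
      intro m hm
      exact N.smul_mem _ (hGm m (hJf.mem_toFinset.1 hm)).1
    have := N.sub_mem huN hsum
    convert this using 1
    have hce : ∀ m, c m • e m =
        (monomial (m.1 - (q m).1) (c m) : MvPolynomial (Fin n) K) • T m.2 (q m) := by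
      intro m
      simp only [e]
      rw [← smul_assoc, smul_monomial, smul_eq_mul, mul_one]
    simp only [u', h', hce, sub_smul, smul_sub, Finset.sum_sub_distrib, Finset.sum_smul, mul_smul]
    abel
  obtain ⟨m', hm', -⟩ := H h' ⟨u', hu', hN'⟩
  have hdeg : ∀ m : MMon n r, coeffM h' m ≠ 0 → m.1.degree ≤ D := by
    intro m hm
    by_contra hlt
    apply hm
    simp only [h']
    rw [coeffM_sub, coeffM_sum]
    have h1 : coeffM h m = 0 := by
      by_contra h0; exact hlt (hD m h0)
    rw [h1, zero_sub, neg_eq_zero]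
    apply Finset.sum_eq_zero
    intro j hj
    have hjJ := hJf.mem_toFinset.1 hj
    have : coeffM (c j • e j) m = c j * coeffM (e j) m := (coeffL m).map_smul (c j) (e j)
    rw [this]
    apply mul_eq_zero_of_right
    by_cases hle : j.1 - (q j).1 ≤ m.1
    · have hm2 : m = ((m.1 - (j.1 - (q j).1)) + (j.1 - (q j).1), m.2) := by
        ext1
        · exact (tsub_add_cancel_of_le hle).symm
        · rfl
      have h5 := coeffM_mon_smul (j.1 - (q j).1) 1 (T j.2 (q j)) (m.1 - (j.1 - (q j).1), m.2)
      simp only at h5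
      rw [← hm2, one_mul] at h5
      simp only [e]
      rw [h5]
      by_contra h0
      have h6 := (hGm j hjJ).2.2.2 _ h0
      apply hlt
      have h7 : m.1.degree = (m.1 - (j.1 - (q j).1)).degree + (j.1 - (q j).1).degree := by
        conv_lhs => rw [hm2]
        simp
      have h8 : j.1.degree = (q j).1.degree + (j.1 - (q j).1).degree := by
        conv_lhs => rw [hmeq j hjJ]
        simp
      have h9 := (hq j hjJ).2.2
      simp only at h6
      omega
    · exact coeffM_mon_smul' _ _ _ _ hle
  have hm'D := hdeg m' hm'.1
  obtain ⟨y, hy, hyle⟩ := hY m'.2 (m'.1, D - m'.1.degree) ⟨h', u', hN', Or.inr hu', hm', by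
    intro m hm
    have := hdeg m hm
    simp only
    omega⟩
  have hmJ : m' ∈ Js := ⟨hm'D, y, hy, hyle.1, by
    have := hyle.2
    simp only at this
    omega⟩
  exact hm'.1 (hc1 m' (hJf.mem_toFinset.2 hmJ))

/-- the induced (Schreyer) order -/
noncomputable def O2 {s : ℕ} (l : Fin s → MMon n r) (ρ : Fin s → ℝ) : TO n s w (L ×ₗ Fin s) where
  κ m := toLex (O.κ (m.1 + (l m.2).1, (l m.2).2), m.2)
  ω m := wdot w m.1 + O.ω (l m.2) + ρ m.2
  inj := by
    rintro ⟨u, i⟩ ⟨u', i'⟩ h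
    simp only [EmbeddingLike.apply_eq_iff_eq, Prod.mk.injEq] at h
    obtain ⟨h1, rfl⟩ := h
    have := O.inj h1
    simp only [Prod.mk.injEq, add_left_inj, and_true] at this
    rw [this]
  mono := by
    rintro ⟨u, i⟩ ⟨u', i'⟩ α h
    rw [Prod.Lex.toLex_lt_toLex] at h ⊢
    simp only at h ⊢
    rcases h with h | ⟨h, h2⟩
    · left
      have := O.mono _ _ α h
      simpa only [add_right_comm] using this
    · right
      refine ⟨?_, h2⟩
      have := O.inj h
      simp only [Prod.mk.injEq] at this
      rw [add_right_comm, add_right_comm u', this.1, this.2]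
  le_add := by
    rintro ⟨u, i⟩ α
    rw [Prod.Lex.toLex_le_toLex]
    simp only
    have := O.le_add (u + (l i).1, (l i).2) α
    simp only [add_right_comm _ _ α] at this
    rcases this.lt_or_eq with h | h
    · exact Or.inl h
    · exact Or.inr ⟨h, le_rfl⟩
  ω_add := by
    rintro ⟨u, i⟩ α
    simp only [wdot_add]
    ring

/-- the key of the image of the initial term -/
noncomputable def sig {s : ℕ} (l : Fin s → MMon n r) (lc : Fin s → K) (c : K) (m : MMon n s) :
    WithTop ℝ ×ₗ Lᵒᵈ := tau V O (c * lc m.2) (m.1 + (l m.2).1, (l m.2).2)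

theorem tau2_le {s : ℕ} (l : Fin s → MMon n r) (ρ : Fin s → ℝ) (lc : Fin s → K)
    (hρ : ∀ i, V (lc i) = ρ i) (c c' : K) (m m' : MMon n s) :
    tau V (O2 O l ρ) c m ≤ tau V (O2 O l ρ) c' m' ↔
      sig V O l lc c m < sig V O l lc c' m' ∨
        (sig V O l lc c m = sig V O l lc c' m' ∧ m'.2 ≤ m.2) := by
  have key : ∀ (c : K) (m : MMon n s), V (c * lc m.2) +
      ((O.ω (m.1 + (l m.2).1, (l m.2).2) : ℝ) : WithTop ℝ) =
      V c + (((O2 O l ρ).ω m : ℝ) : WithTop ℝ) := by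
    intro c m
    rw [add_comm m.1, O.ω_add, AddValuation.map_mul, hρ, add_assoc]
    congr 1
    norm_cast
    simp only [O2]
    ring
  rw [tau_le, sig, sig, tau_lt, key, key]
  have h2 : tau V O (c * lc m.2) (m.1 + (l m.2).1, (l m.2).2) =
      tau V O (c' * lc m'.2) (m'.1 + (l m'.2).1, (l m'.2).2) ↔
      V c + (((O2 O l ρ).ω m : ℝ) : WithTop ℝ) = V c' + (((O2 O l ρ).ω m' : ℝ) : WithTop ℝ) ∧
      O.κ (m.1 + (l m.2).1, (l m.2).2) = O.κ (m'.1 + (l m'.2).1, (l m'.2).2) := by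
    rw [← key, ← key]
    simp [tau]
  rw [h2]
  have h3 : (O2 O l ρ).κ m' ≤ (O2 O l ρ).κ m ↔
      O.κ (m'.1 + (l m'.2).1, (l m'.2).2) < O.κ (m.1 + (l m.2).1, (l m.2).2) ∨
      (O.κ (m.1 + (l m.2).1, (l m.2).2) = O.κ (m'.1 + (l m'.2).1, (l m'.2).2) ∧ m'.2 ≤ m.2) := by
    simp only [O2, Prod.Lex.toLex_le_toLex]
    rw [eq_comm (a := O.κ (m.1 + (l m.2).1, (l m.2).2))]
  rw [h3]
  tauto

section phi
variable {s : ℕ} (g : Fin s → Fin r → MvPolynomial (Fin n) K) (l : Fin s → MMon n r)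

theorem coeffM_phi [DecidableEq (Fin n)] (h : Fin s → MvPolynomial (Fin n) K) (m : MMon n r) :
    coeffM (∑ k, h k • g k) m = ∑ z ∈ (Finset.univ : Finset (Fin s)).sigma
      (fun _ => Finset.HasAntidiagonal.antidiagonal m.1), coeffM h (z.2.1, z.1) * coeffM (g z.1) (z.2.2, m.2) := by
  rw [coeffM_sum, Finset.sum_sigma]
  apply Finset.sum_congr rfl
  intro k _
  simp only [coeffM, Pi.smul_apply, smul_eq_mul, coeff_mul]

theorem phi_term (hl : ∀ i, Ini V O (g i) (l i)) (h : Fin s → MvPolynomial (Fin n) K) (u v : Fin n →₀ ℕ) (k : Fin s)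
      (j : Fin r) (hc : coeffM h (u, k) ≠ 0) :
    sig V O l (fun i => coeffM (g i) (l i)) (coeffM h (u, k)) (u, k) ≤
      tau V O (coeffM h (u, k) * coeffM (g k) (v, j)) (u + v, j) := by
  have := tau_mul V O hc u ((hl k).2 (v, j))
  simp only [sig]
  rw [add_comm u, add_comm u]
  exact this

theorem phi_bound (hl : ∀ i, Ini V O (g i) (l i)) (h : Fin s → MvPolynomial (Fin n) K) {p : MMon n s} (hp : coeffM h p ≠ 0)
    (hmin : ∀ m', sig V O l (fun i => coeffM (g i) (l i)) (coeffM h p) p ≤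
      sig V O l (fun i => coeffM (g i) (l i)) (coeffM h m') m') (m : MMon n r) :
    sig V O l (fun i => coeffM (g i) (l i)) (coeffM h p) p ≤
      tau V O (coeffM (∑ k, h k • g k) m) m := by
  classical
  have hne := mul_ne_zero hp (hl p.2).1
  rw [coeffM_phi]
  apply tau_sum_le V O _ _ (tau_lt_zero V O hne _ _).le
  rintro ⟨k, u, v⟩ hz
  simp only [Finset.mem_sigma, Finset.mem_univ, Finset.HasAntidiagonal.mem_antidiagonal, true_and] at hz ⊢
  by_cases hc : coeffM h (u, k) = 0
  · rw [hc, zero_mul]; exact (tau_lt_zero V O hne _ _).le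
  have := phi_term V O g l hl h u v k m.2 hc
  rw [hz] at this
  exact (hmin _).trans this

theorem phi_ini (hl : ∀ i, Ini V O (g i) (l i)) (h : Fin s → MvPolynomial (Fin n) K) {p : MMon n s} (hp : coeffM h p ≠ 0)
    (hmin : ∀ m', sig V O l (fun i => coeffM (g i) (l i)) (coeffM h p) p ≤
      sig V O l (fun i => coeffM (g i) (l i)) (coeffM h m') m')
    (huniq : ∀ m', coeffM h m' ≠ 0 → sig V O l (fun i => coeffM (g i) (l i)) (coeffM h m') m' =
      sig V O l (fun i => coeffM (g i) (l i)) (coeffM h p) p → m' = p) :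
    Ini V O (∑ k, h k • g k) (p.1 + (l p.2).1, (l p.2).2) ∧
    tau V O (coeffM (∑ k, h k • g k) (p.1 + (l p.2).1, (l p.2).2))
      (p.1 + (l p.2).1, (l p.2).2) = sig V O l (fun i => coeffM (g i) (l i)) (coeffM h p) p := by
  classical
  have hne := mul_ne_zero hp (hl p.2).1
  have hmem : (⟨p.2, p.1, (l p.2).1⟩ : Σ _ : Fin s, (Fin n →₀ ℕ) × (Fin n →₀ ℕ)) ∈
      (Finset.univ : Finset (Fin s)).sigma (fun _ => Finset.HasAntidiagonal.antidiagonal (p.1 + (l p.2).1)) := by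
    simp
  have heq : tau V O (coeffM (∑ k, h k • g k) (p.1 + (l p.2).1, (l p.2).2))
      (p.1 + (l p.2).1, (l p.2).2) =
      sig V O l (fun i => coeffM (g i) (l i)) (coeffM h p) p := by
    rw [coeffM_phi, ← Finset.add_sum_erase _ _ hmem]
    apply tau_dom
    apply tau_sum_lt V O _ _ (tau_lt_zero V O hne _ _)
    rintro ⟨k, u, v⟩ hz
    rw [Finset.mem_erase] at hz
    obtain ⟨hz1, hz⟩ := hz
    simp only [Finset.mem_sigma, Finset.mem_univ, Finset.HasAntidiagonal.mem_antidiagonal, true_and] at hz ⊢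
    by_cases hc : coeffM h (u, k) = 0
    · rw [hc, zero_mul]; exact tau_lt_zero V O hne _ _
    have h1 := phi_term V O g l hl h u v k (l p.2).2 hc
    rw [hz] at h1
    rcases (hmin (u, k)).lt_or_eq with h2 | h2
    · exact h2.trans_le h1
    · exfalso
      have h3 := huniq (u, k) hc h2.symm
      subst h3
      simp only at hz1 hz
      apply hz1
      rw [add_right_inj] at hz
      rw [hz]
  refine ⟨⟨?_, ?_⟩, heq⟩
  · intro h0
    rw [h0] at heq
    exact absurd heq (tau_lt_zero V O hne _ _).ne'
  · intro m'
    rw [heq]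
    exact phi_bound V O g l hl h hp hmin m'

end phi

/-- multiplication by a unit-like polynomial keeps the initial monomial -/
theorem ini_unit {f : Fin r → MvPolynomial (Fin n) K} {m : MMon n r} (hm : Ini V O f m)
    {u : MvPolynomial (Fin n) K} (hu : UP V w (u - 1)) : Ini V O (u • f) m := by
  classical
  have hdec : u • f = f + (u - 1) • f := by rw [sub_smul, one_smul]; abel
  have hlt : ∀ x, V (coeffM f m) + (O.ω m : ℝ) < V (coeffM ((u - 1) • f) x) + (O.ω x : ℝ) := by
    intro x
    have hfin := V_ne_top V hm.1
    have e : coeffM ((u - 1) • f) x = ∑ z ∈ Finset.HasAntidiagonal.antidiagonal x.1,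
        coeff z.1 (u - 1) * coeffM f (z.2, x.2) := by
      simp only [coeffM, Pi.smul_apply, smul_eq_mul, coeff_mul]
    have hsub : ∀ (y : WithTop ℝ), V (coeffM f m) + (O.ω m : ℝ) < y + (O.ω x : ℝ) ↔
        V (coeffM f m) + ((O.ω m - O.ω x : ℝ) : WithTop ℝ) < y := by
      intro y
      lift V (coeffM f m) to ℝ using hfin with b hb
      cases y
      · refine iff_of_true ?_ ?_
        · rw [WithTop.top_add, ← WithTop.coe_add]; exact WithTop.coe_lt_top _
        · rw [← WithTop.coe_add]; exact WithTop.coe_lt_top _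
      · norm_cast
        constructor <;> intro h <;> linarith
    rw [hsub, e]
    apply AddValuation.map_lt_sum V
    · lift V (coeffM f m) to ℝ using hfin with b hb
      exact WithTop.coe_ne_top
    rintro ⟨α, β⟩ hz
    rw [Finset.HasAntidiagonal.mem_antidiagonal] at hz
    simp only at hz ⊢
    rw [← hsub, AddValuation.map_mul]
    have h1 := hu α
    have h2 : V (coeffM f m) + (O.ω m : ℝ) ≤ V (coeffM f (β, x.2)) + (O.ω (β, x.2) : ℝ) := by
      have := (tau_le V O).1 (hm.2 (β, x.2))
      rcases this with h | ⟨h, -⟩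
      · exact h.le
      · exact h.le
    have h3 : O.ω x = O.ω (β, x.2) + wdot w α := by
      have := O.ω_add (β, x.2) α
      simp only at this
      rw [← this, add_comm β, hz]
    rw [h3]
    lift V (coeffM f m) to ℝ using hfin with b hb
    generalize V (coeff α (u - 1)) = y at h1 ⊢
    generalize V (coeffM f (β, x.2)) = z at h2 ⊢
    cases y <;> cases z <;> norm_cast at * <;> simp
    linarith
  have hcoef : ∀ x, coeffM (u • f) x = coeffM f x + coeffM ((u - 1) • f) x := fun x => by
    conv_lhs => rw [hdec]
    exact coeffM_add _ _ _
  have heq : tau V O (coeffM (u • f) m) m = tau V O (coeffM f m) m := by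
    rw [hcoef]
    apply tau_dom
    rw [tau_lt]
    exact Or.inl (hlt m)
  refine ⟨?_, ?_⟩
  · exact ne_zero_of_tau_le V O hm.1 heq.le
  · intro x
    rw [heq, hcoef]
    apply tau_add_le V O (hm.2 x)
    rw [tau_le]
    exact Or.inl (hlt x)

section syz
variable {s : ℕ} (g : Fin s → Fin r → MvPolynomial (Fin n) K) (l : Fin s → MMon n r)

theorem sform_gt (hl : ∀ i, Ini V O (g i) (l i)) (i j : Fin s) (hij : (l i).2 = (l j).2)
    (m : MMon n r) :
    tau V O 1 ((l i).1 ⊔ (l j).1, (l i).2) < tau V O (coeffM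
      ((monomial ((l i).1 ⊔ (l j).1 - (l i).1) (coeffM (g i) (l i))⁻¹ : MvPolynomial (Fin n) K) • g i -
       (monomial ((l i).1 ⊔ (l j).1 - (l j).1) (coeffM (g j) (l j))⁻¹ : MvPolynomial (Fin n) K) • g j)
        m) m := by
  have key : ∀ i : Fin s, ∀ q : Fin n →₀ ℕ, (l i).1 ≤ q →
      Ini V O ((monomial (q - (l i).1) (coeffM (g i) (l i))⁻¹ : MvPolynomial (Fin n) K) • g i)
        (q, (l i).2) ∧
      coeffM ((monomial (q - (l i).1) (coeffM (g i) (l i))⁻¹ : MvPolynomial (Fin n) K) • g i)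
        (q, (l i).2) = 1 := by
    intro i q hq
    have e : (l i).1 + (q - (l i).1) = q := add_tsub_cancel_of_le hq
    have h1 := (hl i).mon_smul V O (q - (l i).1) (inv_ne_zero (hl i).1)
    have h2 := coeffM_mon_smul (q - (l i).1) (coeffM (g i) (l i))⁻¹ (g i) (l i)
    rw [e] at h1 h2
    rw [inv_mul_cancel₀ (hl i).1] at h2
    exact ⟨h1, h2⟩
  obtain ⟨a1, a2⟩ := key i ((l i).1 ⊔ (l j).1) le_sup_left
  obtain ⟨b1, b2⟩ := key j ((l i).1 ⊔ (l j).1) le_sup_right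
  rw [← hij] at b1 b2
  rw [coeffM_sub]
  by_cases hm : m = ((l i).1 ⊔ (l j).1, (l i).2)
  · subst hm
    rw [a2, b2, sub_self]
    exact tau_lt_zero V O one_ne_zero _ _
  · rw [sub_eq_add_neg]
    apply tau_add_lt
    · have := tau_lt_of_le_of_ne V O (a1.2 m) (Ne.symm hm)
      rwa [a2] at this
    · rw [tau_neg]
      have := tau_lt_of_le_of_ne V O (b1.2 m) (Ne.symm hm)
      rwa [b2] at this

theorem comp_bound (hl : ∀ i, Ini V O (g i) (l i)) (ρ : Fin s → ℝ)
    (hρ : ∀ i, V (coeffM (g i) (l i)) = ρ i) (m0 : MMon n r)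
    (h : MvPolynomial (Fin n) K) (k : Fin s)
    (hb : ∀ m, tau V O 1 m0 < tau V O (coeffM (h • g k) m) m) (u : Fin n →₀ ℕ) :
    tau V O 1 m0 < sig V O l (fun i => coeffM (g i) (l i)) (coeff u h) (u, k) := by
  classical
  by_cases h0 : h = 0
  · subst h0
    simp only [sig, coeff_zero, zero_mul]
    exact tau_lt_zero V O one_ne_zero _ _
  have hH : (Pi.single k h : Fin s → MvPolynomial (Fin n) K) ≠ 0 := by
    simpa using h0
  have hc : ∀ m : MMon n s, coeffM (Pi.single k h : Fin s → MvPolynomial (Fin n) K) m ≠ 0 →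
      m.2 = k := by
    intro m hm
    by_contra hk
    apply hm
    simp [coeffM, hk]
  have hsum : ∑ k', (Pi.single k h : Fin s → MvPolynomial (Fin n) K) k' • g k' = h • g k := by
    rw [Finset.sum_eq_single k]
    · simp
    · intro b _ hbk
      simp [hbk]
    · simp
  obtain ⟨p, hp⟩ := exists_ini V (O2 O l ρ) hH
  have hmin : ∀ m', sig V O l (fun i => coeffM (g i) (l i))
      (coeffM (Pi.single k h : Fin s → MvPolynomial (Fin n) K) p) p ≤
      sig V O l (fun i => coeffM (g i) (l i))
      (coeffM (Pi.single k h : Fin s → MvPolynomial (Fin n) K) m') m' := by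
    intro m'
    rcases (tau2_le V O l ρ (fun i => coeffM (g i) (l i)) hρ _ _ _ _).1 (hp.2 m') with h | ⟨h, -⟩
    · exact h.le
    · exact h.le
  have hpk := hc p hp.1
  have := (phi_ini V O g l hl _ hp.1 hmin (by
    intro m' hm' he
    have hk := hc m' hm'
    have := tau_eq_mon V O he
    rw [hk, hpk] at this
    simp only [Prod.mk.injEq, add_left_inj, and_true] at this
    ext1
    · exact this
    · rw [hk, hpk])).2
  rw [hsum] at this
  have h2 := hmin (u, k)
  rw [← this] at h2
  have h3 := (hb _).trans_le h2
  simpa [coeffM] using h3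

theorem tau2_lt {lc : Fin s → K} {ρ : Fin s → ℝ}
    (hρ : ∀ i, V (lc i) = ρ i) {c c' : K} {m m' : MMon n s}
    (h : sig V O l lc c m < sig V O l lc c' m') :
    tau V (O2 O l ρ) c m < tau V (O2 O l ρ) c' m' := by
  rw [← not_le, tau2_le V O l ρ lc hρ]
  rintro (h2 | ⟨h2, -⟩)
  · exact absurd h h2.not_gt
  · exact absurd h h2.not_gt

theorem syz (hl : ∀ i, Ini V O (g i) (l i)) (ρ : Fin s → ℝ)
    (hρ : ∀ i, V (coeffM (g i) (l i)) = ρ i) (i j : Fin s) (hji : j < i)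
    (hij : (l i).2 = (l j).2) (h : Fin s → MvPolynomial (Fin n) K)
    (hh : (monomial ((l i).1 ⊔ (l j).1 - (l i).1) (coeffM (g i) (l i))⁻¹ :
        MvPolynomial (Fin n) K) • g i -
       (monomial ((l i).1 ⊔ (l j).1 - (l j).1) (coeffM (g j) (l j))⁻¹ :
        MvPolynomial (Fin n) K) • g j = ∑ k, h k • g k)
    (hb : ∀ k m, tau V O 1 ((l i).1 ⊔ (l j).1, (l i).2) < tau V O (coeffM (h k • g k) m) m) :
    ∃ z : Fin s → MvPolynomial (Fin n) K, ∑ k, z k • g k = 0 ∧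
      Ini V (O2 O l ρ) z ((l i).1 ⊔ (l j).1 - (l i).1, i) := by
  classical
  have hS : ∀ (i : Fin s) (a : MvPolynomial (Fin n) K),
      ∑ k', (Pi.single i a : Fin s → MvPolynomial (Fin n) K) k' • g k' = a • g i := by
    intro i a
    rw [Finset.sum_eq_single i]
    · simp
    · intro b _ hbk
      simp [hbk]
    · simp
  set q := (l i).1 ⊔ (l j).1 with hq
  set A : MvPolynomial (Fin n) K := monomial (q - (l i).1) (coeffM (g i) (l i))⁻¹ with hA
  set B : MvPolynomial (Fin n) K := monomial (q - (l j).1) (coeffM (g j) (l j))⁻¹ with hB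
  refine ⟨Pi.single i A - Pi.single j B - h, ?_, ?_⟩
  · simp only [Pi.sub_apply, sub_smul, Finset.sum_sub_distrib]
    rw [hS, hS, hh, sub_self]
  have hsg : ∀ (i : Fin s), (l i).1 ≤ q → sig V O l (fun i => coeffM (g i) (l i))
      (coeffM (g i) (l i))⁻¹ (q - (l i).1, i) = tau V O 1 (q, (l i).2) := by
    intro i hi
    simp only [sig]
    rw [inv_mul_cancel₀ (hl i).1, tsub_add_cancel_of_le hi]
  have hne : (coeffM (g i) (l i))⁻¹ ≠ 0 := inv_ne_zero (hl i).1
  have hhb : ∀ m : MMon n s, tau V (O2 O l ρ) (coeffM (g i) (l i))⁻¹ (q - (l i).1, i) <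
      tau V (O2 O l ρ) (coeffM h m) m := by
    intro m
    apply tau2_lt V O l hρ
    rw [hsg i le_sup_left]
    exact comp_bound V O g l hl ρ hρ _ (h m.2) m.2 (hb m.2) m.1
  have hcoef : ∀ m, coeffM (Pi.single i A - Pi.single j B - h) m =
      coeffM (Pi.single i A) m + -coeffM (Pi.single j B) m + -coeffM h m := by
    intro m
    rw [coeffM_sub, coeffM_sub]
    ring
  have hsing : ∀ (i : Fin s) (α : Fin n →₀ ℕ) (c : K) (m : MMon n s),
      coeffM (Pi.single i (monomial α c)) m = if m = (α, i) then c else 0 := by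
    rintro i α c ⟨m1, m2⟩
    simp only [coeffM, Pi.single_apply, Prod.mk.injEq]
    by_cases h2 : m2 = i
    · simp [h2, coeff_monomial, eq_comm]
    · simp [h2]
  have hz : tau V (O2 O l ρ) (coeffM (Pi.single i A - Pi.single j B - h) (q - (l i).1, i))
      (q - (l i).1, i) = tau V (O2 O l ρ) (coeffM (g i) (l i))⁻¹ (q - (l i).1, i) := by
    rw [hcoef, hA, hB, hsing, hsing, if_pos rfl, if_neg, neg_zero, add_zero]
    · apply tau_dom
      rw [tau_neg]
      exact hhb _
    · intro he
      simp only [Prod.mk.injEq] at he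
      exact hji.ne' he.2
  refine ⟨ne_zero_of_tau_le V (O2 O l ρ) hne hz.le, fun m => ?_⟩
  rw [hz, hcoef]
  apply tau_add_le
  · apply tau_add_le
    · rw [hA, hsing]
      split_ifs with he
      · rw [he]
      · exact (tau_lt_zero _ _ hne _ _).le
    · rw [tau_neg, hB, hsing]
      split_ifs with he
      · rw [he, tau2_le V O l ρ _ hρ]
        right
        refine ⟨?_, hji.le⟩
        rw [hsg i le_sup_left, hsg j le_sup_right, hij]
      · exact (tau_lt_zero _ _ hne _ _).le
  · rw [tau_neg]
    exact (hhb m).le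

/-- the abstract form of the criterion -/
theorem crit (hl : ∀ i, Ini V O (g i) (l i))
    (hsyz : ∀ i j, j < i → (l i).2 = (l j).2 → ∃ h : Fin s → MvPolynomial (Fin n) K,
      (monomial ((l i).1 ⊔ (l j).1 - (l i).1) (coeffM (g i) (l i))⁻¹ :
        MvPolynomial (Fin n) K) • g i -
       (monomial ((l i).1 ⊔ (l j).1 - (l j).1) (coeffM (g j) (l j))⁻¹ :
        MvPolynomial (Fin n) K) • g j = ∑ k, h k • g k ∧
      ∀ k m, tau V O 1 ((l i).1 ⊔ (l j).1, (l i).2) < tau V O (coeffM (h k • g k) m) m)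
    (a : Fin s → MvPolynomial (Fin n) K) {m : MMon n r} (hm : Ini V O (∑ k, a k • g k) m) :
    ∃ i α, m = (α + (l i).1, (l i).2) := by
  classical
  obtain ⟨ρ, hρ⟩ : ∃ ρ : Fin s → ℝ, ∀ i, V (coeffM (g i) (l i)) = ρ i := by
    have : ∀ i, ∃ x : ℝ, V (coeffM (g i) (l i)) = x := fun i => by
      have := V_ne_top V (hl i).1
      lift V (coeffM (g i) (l i)) to ℝ using this with x hx
      exact ⟨x, rfl⟩
    choose ρ hρ using this
    exact ⟨ρ, hρ⟩
  let φ := Fintype.linearCombination (MvPolynomial (Fin n) K) g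
  have hφ : ∀ z, φ z = ∑ k, z k • g k := fun z => rfl
  obtain ⟨u, h, hu, hN, hbad⟩ := wnf V (O2 O l ρ) (LinearMap.ker φ) a
  have huf : u • (∑ k, a k • g k) = ∑ k, h k • g k := by
    rw [LinearMap.mem_ker, map_sub, map_smul, sub_eq_zero, hφ, hφ] at hN
    exact hN
  have h1 := ini_unit V O hm hu
  rw [huf] at h1
  have hh0 : h ≠ 0 := by
    rintro rfl
    apply h1.1
    simp [coeffM]
  obtain ⟨p, hp⟩ := exists_ini V (O2 O l ρ) hh0
  have hno := hbad p hp
  have hmin : ∀ m', sig V O l (fun i => coeffM (g i) (l i)) (coeffM h p) p ≤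
      sig V O l (fun i => coeffM (g i) (l i)) (coeffM h m') m' := by
    intro m'
    rcases (tau2_le V O l ρ (fun i => coeffM (g i) (l i)) hρ _ _ _ _).1 (hp.2 m') with h | ⟨h, -⟩
    · exact h.le
    · exact h.le
  have h2 := (phi_ini V O g l hl h hp.1 hmin (by
    intro m' hm' he
    have h3 := tau_eq_mon V O he
    simp only [Prod.mk.injEq] at h3
    obtain ⟨h3, h4⟩ := h3
    have hle : m'.2 ≤ p.2 := by
      rcases (tau2_le V O l ρ (fun i => coeffM (g i) (l i)) hρ _ _ _ _).1 (hp.2 m') with h | ⟨-, h⟩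
      · exact absurd he h.ne'
      · exact h
    rcases hle.lt_or_eq with hlt | heq
    · exfalso
      obtain ⟨h', hh', hb'⟩ := hsyz p.2 m'.2 hlt h4.symm
      obtain ⟨z, hz0, hz⟩ := syz V O g l hl ρ hρ p.2 m'.2 hlt h4.symm h' hh' hb'
      have hle2 : (l p.2).1 ⊔ (l m'.2).1 - (l p.2).1 ≤ p.1 := by
        rw [tsub_le_iff_right]
        apply sup_le
        · exact le_add_of_nonneg_left (zero_le)
        · rw [← h3]; exact le_add_of_nonneg_left (zero_le)
      have hz2 := hz.mon_smul V (O2 O l ρ) (p.1 - ((l p.2).1 ⊔ (l m'.2).1 - (l p.2).1))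
        (one_ne_zero (α := K))
      simp only at hz2
      rw [add_tsub_cancel_of_le hle2] at hz2
      exact hno _ (Submodule.smul_mem _ _ (by rw [LinearMap.mem_ker, hφ, hz0])) hz2
    · rw [heq, add_left_inj] at h3
      ext1
      · exact h3
      · exact heq)).1
  exact ⟨p.2, p.1, h1.unique V O h2⟩

end syz
end gen

/-- the concrete order -/
noncomputable def O1 {n d : ℕ} (w : Fin n → ℝ) (mo : MonomialOrder (Fin n)) :
    TO n d w (mo.syn ×ₗ Fin d) where
  κ m := toLex (mo.toSyn m.1, m.2)
  ω m := wdot w m.1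
  inj := by
    rintro ⟨u, i⟩ ⟨u', i'⟩ h
    simpa using h
  mono := by
    rintro ⟨u, i⟩ ⟨u', i'⟩ α h
    rw [Prod.Lex.toLex_lt_toLex] at h ⊢
    simpa using h
  le_add := by
    rintro ⟨u, i⟩ α
    rw [Prod.Lex.toLex_le_toLex]
    simp only [map_add]
    have : mo.toSyn u ≤ mo.toSyn u + mo.toSyn α := le_add_of_nonneg_right (by
      rw [← map_zero mo.toSyn]; exact mo.toSyn_monotone (zero_le))
    rcases this.lt_or_eq with h | h
    · exact Or.inl h
    · exact Or.inr ⟨h, le_rfl⟩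
  ω_add := by
    rintro ⟨u, i⟩ α
    simp only [wdot_add]

section conc
variable {K : Type*} [Field K] {n d : ℕ} (V : ValOn K) (w : Fin n → ℝ) (mo : MonomialOrder (Fin n))

theorem termLE_iff (t t' : Term K n d) : termLE V.v w mo t t' ↔
    tau (toAdd V) (O1 w mo) t.1 t.2 ≤ tau (toAdd V) (O1 w mo) t'.1 t'.2 := by
  rw [tau_le]
  simp only [termLE, twt, toAdd_apply, O1, mmLt, Prod.Lex.toLex_le_toLex]
  obtain ⟨c, u, i⟩ := t
  obtain ⟨c', u', i'⟩ := t'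
  simp only [EmbeddingLike.apply_eq_iff_eq, Prod.mk.injEq]
  rw [le_iff_lt_or_eq (a := i'), eq_comm (a := u), eq_comm (a := i)]
  tauto

theorem isInit_iff (f : Fin d → MvPolynomial (Fin n) K) (t : Term K n d) :
    IsInit V.v w mo f t ↔ t.1 = coeffM f t.2 ∧ Ini (toAdd V) (O1 w mo) f t.2 := by
  constructor
  · rintro ⟨h1, h2, h3⟩
    refine ⟨h2.symm, by rwa [h2], fun m => ?_⟩
    rw [h2]
    by_cases hm : coeffM f m = 0
    · rw [hm]; exact (tau_lt_zero _ _ h1 _ _).le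
    · exact (termLE_iff V w mo _ _).1 (h3 m hm)
  · rintro ⟨h1, h2, h3⟩
    refine ⟨by rwa [h1], h1.symm, fun m _ => ?_⟩
    rw [termLE_iff, h1]
    exact h3 m

end conc
end BuchAux
/-- **Buchberger criterion for modules over a field with valuation.**
If `S = {g₁,…,g_s}` consists of nonzero elements generating the submodule `I`, and every
defined nonzero S-form `S-form(gᵢ,gⱼ)` reduces to zero on division by `S` (that is, it can be
written `Σ h_k g_k` with `in_{w,≺}(h_k g_k) ≥ in_{w,≺}(S-form(gᵢ,gⱼ))` whenever `h_k g_k ≠ 0`),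
then `in_{w,≺}(I)` is generated by the initial terms `in_{w,≺}(gᵢ)`. -/
theorem buchberger_criterion {K : Type*} [Field K] {n d : ℕ}
    (V : ValOn K) (w : Fin n → ℝ) (mo : MonomialOrder (Fin n)) {s : ℕ}
    (g : Fin s → Fin d → MvPolynomial (Fin n) K) (hg : ∀ i, g i ≠ 0)
    (I : Submodule (MvPolynomial (Fin n) K) (Fin d → MvPolynomial (Fin n) K))
    (hI : Submodule.span (MvPolynomial (Fin n) K) (Set.range g) = I)
    (hS : ∀ i j, ∀ ti tj : Term K n d,
      IsInit V.v w mo (g i) ti → IsInit V.v w mo (g j) tj →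
      ti.2.2 = tj.2.2 →
      sForm (g i) (g j) ti tj ≠ 0 →
      ∃ h : Fin s → MvPolynomial (Fin n) K,
        sForm (g i) (g j) ti tj = ∑ k, h k • g k ∧
        ∀ k, h k • g k ≠ 0 → ∀ t t' : Term K n d,
          IsInit V.v w mo (sForm (g i) (g j) ti tj) t →
          IsInit V.v w mo (h k • g k) t' → termLE V.v w mo t t') :
    inSub V.v w mo I =
      Submodule.span (MvPolynomial (Fin n) K)
        {x | ∃ i, ∃ t : Term K n d, IsInit V.v w mo (g i) t ∧ x = termEl t} := by
  classical
  have hex := fun i => BuchAux.exists_ini (BuchAux.toAdd V) (BuchAux.O1 w mo) (hg i)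
  choose l hl using hex
  have hinit : ∀ i, IsInit V.v w mo (g i) (coeffM (g i) (l i), l i) := fun i =>
    (BuchAux.isInit_iff V w mo _ _).2 ⟨rfl, hl i⟩
  have hcrit := BuchAux.crit (BuchAux.toAdd V) (BuchAux.O1 w mo) g l hl (by
    intro i j hji hij
    have hgt := BuchAux.sform_gt (BuchAux.toAdd V) (BuchAux.O1 w mo) g l hl i j hij
    have hSi := hS i j _ _ (hinit i) (hinit j) hij
    simp only [sForm] at hSi
    generalize hF : (monomial ((l i).1 ⊔ (l j).1 - (l i).1) (coeffM (g i) (l i))⁻¹ :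
        MvPolynomial (Fin n) K) • g i -
       (monomial ((l i).1 ⊔ (l j).1 - (l j).1) (coeffM (g j) (l j))⁻¹ :
        MvPolynomial (Fin n) K) • g j = F at hSi hgt ⊢
    by_cases h0 : F = 0
    · refine ⟨0, by simp [h0], fun k m => ?_⟩
      have : coeffM ((0 : Fin s → MvPolynomial (Fin n) K) k • g k) m = 0 := by simp [coeffM]
      rw [this]
      exact BuchAux.tau_lt_zero _ _ one_ne_zero _ _
    · obtain ⟨h, h1, h2⟩ := hSi h0
      refine ⟨h, h1, fun k m => ?_⟩
      by_cases hk : h k • g k = 0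
      · have : coeffM (h k • g k) m = 0 := by rw [hk]; simp [coeffM]
        rw [this]
        exact BuchAux.tau_lt_zero _ _ one_ne_zero _ _
      · obtain ⟨a, ha⟩ := BuchAux.exists_ini (BuchAux.toAdd V) (BuchAux.O1 w mo) h0
        obtain ⟨b, hb⟩ := BuchAux.exists_ini (BuchAux.toAdd V) (BuchAux.O1 w mo) hk
        have h3 := h2 k hk (coeffM F a, a) (coeffM (h k • g k) b, b)
          ((BuchAux.isInit_iff V w mo _ _).2 ⟨rfl, ha⟩)
          ((BuchAux.isInit_iff V w mo _ _).2 ⟨rfl, hb⟩)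
        rw [BuchAux.termLE_iff] at h3
        exact (hgt a).trans_le (h3.trans (hb.2 m)))
  apply le_antisymm
  · rw [inSub, Submodule.span_le]
    rintro x ⟨f, hf, -, t, ht, rfl⟩
    rw [← hI, Submodule.mem_span_range_iff_exists_fun] at hf
    obtain ⟨a, rfl⟩ := hf
    obtain ⟨i, α, hi⟩ := hcrit a ((BuchAux.isInit_iff V w mo _ _).1 ht).2
    have hmem : termEl (coeffM (g i) (l i), l i) ∈ Submodule.span (MvPolynomial (Fin n) K)
        {x | ∃ i, ∃ t : Term K n d, IsInit V.v w mo (g i) t ∧ x = termEl t} :=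
      Submodule.subset_span ⟨i, _, hinit i, rfl⟩
    have he : termEl t = (monomial α (t.1 * (coeffM (g i) (l i))⁻¹) : MvPolynomial (Fin n) K) •
        termEl (coeffM (g i) (l i), l i) := by
      simp only [termEl]
      rw [hi, ← Pi.single_smul, smul_eq_mul, monomial_mul, mul_assoc,
        inv_mul_cancel₀ (hl i).1, mul_one]
    rw [SetLike.mem_coe, he]
    exact Submodule.smul_mem _ _ hmem
  · rw [Submodule.span_le]
    rintro x ⟨i, t, ht, rfl⟩
    exact Submodule.subset_span ⟨g i, hI ▸ Submodule.subset_span ⟨i, rfl⟩, hg i, t, ht, rfl⟩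
end

section
/- Let I be a submodule of K[x₁,…,xₙ]^d generated by finitely many homogeneous elements, where K is a field with valuation, and let B be the set of module monomials x^u·e_k that do not belong to the initial submodule in_{w,≺}(I). Then the residue classes of the elements of B form a K-vector space basis of the quotient K[x₁,…,xₙ]^d / I. -/
open MvPolynomial

section Helpers

variable {K : Type*} [Field K] {n d : ℕ}

theorem coeffM_ext {f g : Fin d → MvPolynomial (Fin n) K}
    (h : ∀ m : MMon n d, coeffM f m = coeffM g m) : f = g := by
  funext k
  ext u
  exact h (u, k)

theorem coeffM_add' (f g : Fin d → MvPolynomial (Fin n) K) (m : MMon n d) :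
    coeffM (f + g) m = coeffM f m + coeffM g m := by
  simp [coeffM]

theorem coeffM_smulK (c : K) (f : Fin d → MvPolynomial (Fin n) K) (m : MMon n d) :
    coeffM (c • f) m = c * coeffM f m := by
  simp [coeffM]

theorem coeffM_sum' {ι : Type*} (s : Finset ι) (f : ι → Fin d → MvPolynomial (Fin n) K)
    (m : MMon n d) : coeffM (∑ i ∈ s, f i) m = ∑ i ∈ s, coeffM (f i) m := by
  simp [coeffM, Finset.sum_apply, coeff_sum]

theorem coeffM_termEl (c : K) (m m' : MMon n d) :
    coeffM (termEl (c, m)) m' = if m = m' then c else 0 := by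
  classical
  obtain ⟨u, k⟩ := m
  obtain ⟨u', k'⟩ := m'
  simp only [coeffM, termEl, Prod.mk.injEq]
  by_cases h : k = k'
  · subst h
    simp [coeff_monomial]
  · simp [h, Pi.single_apply, Ne.symm h]

theorem coeffM_monomial_smul (a : Fin n →₀ ℕ) (c : K) (f : Fin d → MvPolynomial (Fin n) K)
    (m : MMon n d) :
    coeffM ((monomial a c : MvPolynomial (Fin n) K) • f) m =
      if a ≤ m.1 then c * coeffM f (m.1 - a, m.2) else 0 := by
  simp only [coeffM, Pi.smul_apply, smul_eq_mul, coeff_monomial_mul']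

/-- The finite support of an element. -/
noncomputable def suppM (f : Fin d → MvPolynomial (Fin n) K) : Finset (MMon n d) :=
  (Finset.univ.biUnion fun k => (f k).support) ×ˢ Finset.univ

theorem mem_suppM {f : Fin d → MvPolynomial (Fin n) K} {m : MMon n d} (h : coeffM f m ≠ 0) :
    m ∈ suppM f := by
  simp only [suppM, Finset.mem_product, Finset.mem_biUnion, Finset.mem_univ, true_and, and_true]
  exact ⟨m.2, by simpa [coeffM] using h⟩

/-- Linear key for the term order. -/
noncomputable def tkey (V : ValOn K) (w : Fin n → ℝ) (mo : MonomialOrder (Fin n))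
    (t : Term K n d) : WithTop ℝ ×ₗ (mo.syn ×ₗ Fin d)ᵒᵈ :=
  toLex (twt V.v w t, OrderDual.toDual (toLex (mo.toSyn t.2.1, t.2.2)))

theorem termLE_iff (V : ValOn K) (w : Fin n → ℝ) (mo : MonomialOrder (Fin n))
    (t t' : Term K n d) : termLE V.v w mo t t' ↔ tkey V w mo t ≤ tkey V w mo t' := by
  obtain ⟨c, u, k⟩ := t
  obtain ⟨c', u', k'⟩ := t'
  simp only [termLE, tkey, mmLt, Prod.Lex.toLex_le_toLex, OrderDual.toDual_le_toDual,
    Prod.mk.injEq, EmbeddingLike.apply_eq_iff_eq, le_iff_lt_or_eq (a := k')]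
  grind

theorem exists_isInit (V : ValOn K) (w : Fin n → ℝ) (mo : MonomialOrder (Fin n))
    {f : Fin d → MvPolynomial (Fin n) K} (hf : f ≠ 0) : ∃ t, IsInit V.v w mo f t := by
  classical
  have hne : ((suppM f).filter fun m => coeffM f m ≠ 0).Nonempty := by
    by_contra hcon
    apply hf
    apply coeffM_ext
    intro m
    by_contra hm
    apply hcon
    have hm' : coeffM f m ≠ 0 := by
      intro h0; apply hm; rw [h0]; simp [coeffM]
    exact ⟨m, by simp [mem_suppM hm', hm']⟩
  obtain ⟨m, hm, hmin⟩ := Finset.exists_min_image _ (fun m => tkey V w mo (coeffM f m, m)) hne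
  refine ⟨(coeffM f m, m), (Finset.mem_filter.1 hm).2, rfl, fun m' hm' => ?_⟩
  rw [termLE_iff]
  exact hmin m' (by simp [mem_suppM hm', hm'])

theorem wdot_add (w : Fin n → ℝ) (a u : Fin n →₀ ℕ) : wdot w (a + u) = wdot w a + wdot w u := by
  simp [wdot, mul_add, Finset.sum_add_distrib]

theorem twt_shift (V : ValOn K) (w : Fin n → ℝ) {b c : K} (hb : b ≠ 0) (hc : c ≠ 0)
    (a u : Fin n →₀ ℕ) (k : Fin d) :
    twt V.v w (b * c, (a + u, k)) = (V.v b + (wdot w a : ℝ)) + twt V.v w (c, (u, k)) := by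
  simp only [twt, V.v_mul b c hb hc, wdot_add, WithTop.coe_add]
  abel

theorem termLE_shift (V : ValOn K) (w : Fin n → ℝ) (mo : MonomialOrder (Fin n))
    {b c c' : K} (hb : b ≠ 0) (hc : c ≠ 0) (hc' : c' ≠ 0) (a u u' : Fin n →₀ ℕ) (k k' : Fin d)
    (h : termLE V.v w mo (c, (u, k)) (c', (u', k'))) :
    termLE V.v w mo (b * c, (a + u, k)) (b * c', (a + u', k')) := by
  have hfin : V.v b + (wdot w a : ℝ) ≠ ⊤ := by
    have := mt (V.v_eq_top_iff b).1 hb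
    simp [this]
  unfold termLE at *
  rw [twt_shift V w hb hc, twt_shift V w hb hc']
  rcases h with h | ⟨h, h2⟩
  · left
    exact WithTop.add_lt_add_left hfin h
  · right
    refine ⟨by rw [h], ?_⟩
    simpa [mmLt] using h2

theorem IsInit.shift {V : ValOn K} {w : Fin n → ℝ} {mo : MonomialOrder (Fin n)}
    {f : Fin d → MvPolynomial (Fin n) K} {t : Term K n d} (h : IsInit V.v w mo f t)
    (a : Fin n →₀ ℕ) :
    IsInit V.v w mo ((monomial a 1 : MvPolynomial (Fin n) K) • f)
      (t.1, (a + t.2.1, t.2.2)) := by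
  obtain ⟨c, u, k⟩ := t
  obtain ⟨h1, h2, h3⟩ := h
  refine ⟨h1, ?_, ?_⟩
  · rw [coeffM_monomial_smul]
    simpa using h2
  · rintro ⟨u', k'⟩ hm
    rw [coeffM_monomial_smul] at hm ⊢
    simp only at hm ⊢
    split_ifs at hm ⊢ with hle
    · obtain ⟨u'', rfl⟩ := exists_add_of_le hle
      simp only [add_tsub_cancel_left, one_mul] at hm ⊢
      have := termLE_shift V w mo one_ne_zero h1 hm a u u'' k k' (h3 _ hm)
      simpa using this
    · exact absurd rfl hm

theorem mem_span_terms (T : Set (Term K n d)) {f : Fin d → MvPolynomial (Fin n) K}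
    (hf : f ∈ Submodule.span (MvPolynomial (Fin n) K) (termEl '' T)) :
    ∀ m : MMon n d, coeffM f m ≠ 0 → ∃ t ∈ T, t.2.2 = m.2 ∧ t.2.1 ≤ m.1 := by
  classical
  induction hf using Submodule.span_induction with
  | mem x hx =>
    obtain ⟨⟨c, m'⟩, ht, rfl⟩ := hx
    intro m hm
    rw [coeffM_termEl] at hm
    have : m' = m := by by_contra h; simp [h] at hm
    subst this
    exact ⟨_, ht, rfl, le_rfl⟩
  | zero => intro m hm; simp [coeffM] at hm
  | add x y _ _ hx hy =>
    intro m hm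
    by_cases h : coeffM x m = 0
    · apply hy m
      intro h'
      exact hm (by rw [coeffM_add', h, h', add_zero])
    · exact hx m h
  | smul p x _ hx =>
    intro m hm
    simp only [coeffM, Pi.smul_apply, smul_eq_mul, coeff_mul] at hm
    obtain ⟨⟨i, j⟩, hij, hne⟩ := Finset.exists_ne_zero_of_sum_ne_zero hm
    obtain ⟨t, ht, h1, h2⟩ := hx (j, m.2) (right_ne_zero_of_mul hne)
    refine ⟨t, ht, h1, h2.trans ?_⟩
    rw [← Finset.HasAntidiagonal.mem_antidiagonal.1 hij]
    exact le_add_self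

theorem mem_inSub_iff (V : ValOn K) (w : Fin n → ℝ) (mo : MonomialOrder (Fin n))
    (I : Submodule (MvPolynomial (Fin n) K) (Fin d → MvPolynomial (Fin n) K)) (m : MMon n d) :
    termEl ((1 : K), m) ∈ inSub V.v w mo I ↔
      ∃ f ∈ I, ∃ c, IsInit V.v w mo f (c, m) := by
  constructor
  · intro h
    have hset : {g | ∃ f ∈ I, f ≠ 0 ∧ ∃ t : Term K n d, IsInit V.v w mo f t ∧ g = termEl t} =
        termEl '' {t : Term K n d | ∃ f ∈ I, f ≠ 0 ∧ IsInit V.v w mo f t} := by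
      ext g
      constructor
      · rintro ⟨f, hf, h0, t, ht, rfl⟩
        exact ⟨t, ⟨f, hf, h0, ht⟩, rfl⟩
      · rintro ⟨t, ⟨f, hf, h0, ht⟩, rfl⟩
        exact ⟨f, hf, h0, t, ht, rfl⟩
    rw [inSub, hset] at h
    obtain ⟨t, ⟨f, hf, -, ht⟩, h1, h2⟩ := mem_span_terms _ h m (by simp [coeffM_termEl])
    obtain ⟨u, hu⟩ := exists_add_of_le h2
    refine ⟨_, I.smul_mem (monomial u 1) hf, t.1, ?_⟩
    have := ht.shift u
    rwa [add_comm, ← hu, h1] at this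
  · rintro ⟨f, hf, c, hc⟩
    have hc0 : c ≠ 0 := hc.1
    have hmem : termEl (c, m) ∈ inSub V.v w mo I := by
      apply Submodule.subset_span
      refine ⟨f, hf, ?_, _, hc, rfl⟩
      rintro rfl
      apply hc0
      rw [← show coeffM _ m = c from hc.2.1]
      simp [coeffM]
    have := (inSub V.v w mo I).smul_mem (monomial 0 c⁻¹) hmem
    convert this using 1
    apply coeffM_ext
    intro m'
    rw [coeffM_monomial_smul]
    simp [coeffM_termEl, hc0]

/-- Homogeneous component. -/
noncomputable def hcM (δ : ℕ) (f : Fin d → MvPolynomial (Fin n) K) :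
    Fin d → MvPolynomial (Fin n) K := fun k => homogeneousComponent δ (f k)

theorem coeffM_hcM (δ : ℕ) (f : Fin d → MvPolynomial (Fin n) K) (m : MMon n d) :
    coeffM (hcM δ f) m = if m.1.degree = δ then coeffM f m else 0 := by
  simp [coeffM, hcM, coeff_homogeneousComponent]

theorem hcM_add (δ : ℕ) (f g : Fin d → MvPolynomial (Fin n) K) :
    hcM δ (f + g) = hcM δ f + hcM δ g := by
  funext k; simp [hcM]

theorem hcM_monomial_smul (δ : ℕ) (a : Fin n →₀ ℕ) (c : K)
    (f : Fin d → MvPolynomial (Fin n) K) :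
    hcM δ ((monomial a c : MvPolynomial (Fin n) K) • f) =
      if a.degree ≤ δ then (monomial a c : MvPolynomial (Fin n) K) • hcM (δ - a.degree) f
      else 0 := by
  apply coeffM_ext
  rintro ⟨u, k⟩
  rw [coeffM_hcM, coeffM_monomial_smul]
  by_cases hle : a ≤ u
  · obtain ⟨u, rfl⟩ := exists_add_of_le hle
    have hd : (a + u).degree = a.degree + u.degree := map_add Finsupp.degree a u
    by_cases h : a.degree ≤ δ
    · rw [if_pos h, coeffM_monomial_smul, coeffM_hcM]
      simp only [hle, add_tsub_cancel_left, if_true, hd]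
      by_cases h' : u.degree = δ - a.degree
      · rw [if_pos h', if_pos (by omega)]
      · rw [if_neg h', if_neg (by omega), mul_zero]
    · rw [if_neg h, if_neg (by simp only [hd]; omega)]
      simp [coeffM]
  · by_cases h : a.degree ≤ δ
    · rw [if_pos h, coeffM_monomial_smul]
      simp [hle]
    · rw [if_neg h]
      simp [hle, coeffM]

theorem hcM_mem {s : ℕ} (g : Fin s → Fin d → MvPolynomial (Fin n) K)
    (hg : ∀ i, IsHomog (g i)) {f : Fin d → MvPolynomial (Fin n) K}
    (hf : f ∈ Submodule.span (MvPolynomial (Fin n) K) (Set.range g)) :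
    ∀ δ, hcM δ f ∈ Submodule.span (MvPolynomial (Fin n) K) (Set.range g) := by
  induction hf using Submodule.span_induction with
  | mem x hx =>
    intro δ
    have hx' := Submodule.subset_span (R := MvPolynomial (Fin n) K) hx
    obtain ⟨i, rfl⟩ := hx
    obtain ⟨ε, hε⟩ := hg i
    have hdeg : ∀ m : MMon n d, coeffM (g i) m ≠ 0 → m.1.degree = ε := by
      intro m hm
      rw [← hε m hm, Finsupp.degree_eq_sum]
    by_cases h : ε = δ
    · have hx2 : g i ∈ Submodule.span (MvPolynomial (Fin n) K) (Set.range g) := hx'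
      convert hx2 using 1
      apply coeffM_ext
      intro m
      rw [coeffM_hcM]
      split_ifs with h'
      · rfl
      · by_contra h0
        exact h' ((hdeg m (Ne.symm h0)).trans h)
    · convert Submodule.zero_mem _
      apply coeffM_ext
      intro m
      rw [coeffM_hcM]
      split_ifs with h'
      · by_contra h0
        refine h ((hdeg m ?_).symm.trans h')
        simpa [coeffM] using h0
      · simp [coeffM]
  | zero =>
    intro δ
    convert Submodule.zero_mem _
    funext k; simp [hcM]
  | add x y _ _ hx hy =>
    intro δ
    rw [hcM_add]
    exact Submodule.add_mem _ (hx δ) (hy δ)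
  | smul p x _ hx =>
    induction p using MvPolynomial.induction_on' with
    | monomial u a =>
      intro δ
      rw [hcM_monomial_smul]
      split_ifs
      · exact Submodule.smul_mem _ _ (hx _)
      · exact Submodule.zero_mem _
    | add p q hp hq =>
      intro δ
      rw [add_smul, hcM_add]
      exact Submodule.add_mem _ (hp δ) (hq δ)

theorem IsInit.hcM {V : ValOn K} {w : Fin n → ℝ} {mo : MonomialOrder (Fin n)}
    {f : Fin d → MvPolynomial (Fin n) K} {t : Term K n d} (h : IsInit V.v w mo f t) :
    IsInit V.v w mo (hcM t.2.1.degree f) t := by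
  obtain ⟨h1, h2, h3⟩ := h
  refine ⟨h1, by rw [coeffM_hcM, if_pos rfl, h2], fun m hm => ?_⟩
  rw [coeffM_hcM] at hm ⊢
  split_ifs at hm ⊢ with hd
  · exact h3 m hm
  · exact absurd rfl hm

theorem isInit_termEl (V : ValOn K) (w : Fin n → ℝ) (mo : MonomialOrder (Fin n)) (m : MMon n d) :
    IsInit V.v w mo (termEl ((1 : K), m)) (1, m) := by
  refine ⟨one_ne_zero, by simp [coeffM_termEl], fun m' hm' => ?_⟩
  rw [coeffM_termEl] at hm' ⊢
  split_ifs at hm' ⊢ with h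
  · subst h
    rw [termLE_iff]
  · exact absurd rfl hm'

theorem v_neg (V : ValOn K) (a : K) : V.v (-a) = V.v a := by
  by_cases ha : a = 0
  · simp [ha]
  have h1 : V.v 1 ≠ ⊤ := mt (V.v_eq_top_iff 1).1 one_ne_zero
  have hn : V.v (-1) ≠ ⊤ := mt (V.v_eq_top_iff (-1)).1 (neg_ne_zero.2 one_ne_zero)
  have e1 := V.v_mul 1 1 one_ne_zero one_ne_zero
  have e2 := V.v_mul (-1) (-1) (neg_ne_zero.2 one_ne_zero) (neg_ne_zero.2 one_ne_zero)
  have e3 := V.v_mul (-1) a (neg_ne_zero.2 one_ne_zero) ha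
  lift V.v 1 to ℝ using h1 with x hx
  lift V.v (-1) to ℝ using hn with y hy
  simp only [mul_neg, mul_one, neg_neg, neg_mul, one_mul] at e1 e2 e3
  rw [← hx] at e1 e2
  norm_cast at e1 e2
  have : y = 0 := by linarith
  rw [e3, this]
  simp

theorem v_sum_gt (V : ValOn K) {ι : Type*} (s : Finset ι) (b : ι → K) (r : WithTop ℝ)
    (hr : r ≠ ⊤) (h : ∀ i ∈ s, r < V.v (b i)) : r < V.v (∑ i ∈ s, b i) := by
  classical
  induction s using Finset.induction_on with
  | empty =>
    rw [Finset.sum_empty, (V.v_eq_top_iff 0).2 rfl]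
    exact lt_top_iff_ne_top.2 hr
  | insert i s hi ih =>
    rw [Finset.sum_insert hi]
    refine lt_of_lt_of_le (lt_min (h i (by simp)) (ih fun j hj => h j (by simp [hj]))) 
      (V.v_add_min _ _)

/-- Vectors with distinct initial monomials are independent (on a finite set of monomials). -/
theorem indep_of_init (V : ValOn K) (w : Fin n → ℝ) (mo : MonomialOrder (Fin n))
    (S : Finset (MMon n d)) (F : MMon n d → Fin d → MvPolynomial (Fin n) K) (c : MMon n d → K)
    (hF : ∀ m, IsInit V.v w mo (F m) (c m, m)) :
    LinearIndependent K (fun m : S => fun m' : S => coeffM (F m) m') := by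
  classical
  rw [Fintype.linearIndependent_iff]
  intro a ha
  by_contra! hne
  obtain ⟨i0, hi0⟩ := hne
  obtain ⟨m, hm, hmin⟩ := Finset.exists_min_image (Finset.univ.filter fun i : S => a i ≠ 0)
    (fun i => tkey V w mo (a i * c i, (i : MMon n d))) ⟨i0, by simp [hi0]⟩
  have hm0 : a m ≠ 0 := (Finset.mem_filter.1 hm).2
  have hc0 : ∀ m, c m ≠ 0 := fun m => (hF m).1
  have hcm : coeffM (F m) m = c m := (hF m).2.1
  have hsum : ∑ i, a i * coeffM (F i) m = 0 := by
    have := congrFun ha m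
    simpa [Finset.sum_apply] using this
  rw [← Finset.add_sum_erase _ _ (Finset.mem_univ m), hcm] at hsum
  have hprod : a m * c m ≠ 0 := mul_ne_zero hm0 (hc0 _)
  have hlt := v_sum_gt V (Finset.univ.erase m) (fun i => a i * coeffM (F i) m) (V.v (a m * c m))
    (mt (V.v_eq_top_iff _).1 hprod) (by
      intro i hi
      have him : i ≠ m := (Finset.mem_erase.1 hi).1
      by_cases hz : a i * coeffM (F i) m = 0
      · simp only [hz]
        rw [(V.v_eq_top_iff 0).2 rfl]
        exact lt_top_iff_ne_top.2 (mt (V.v_eq_top_iff _).1 hprod)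
      · have hai := left_ne_zero_of_mul hz
        have hci := right_ne_zero_of_mul hz
        have h1 := hmin i (by simp [hai])
        have h2 := termLE_shift V w mo hai (hc0 i) hci 0 _ _ _ _ ((hF i).2.2 m hci)
        simp only [zero_add, Prod.mk.eta] at h2
        rw [termLE_iff] at h2
        have hne : tkey V w mo (a i * c i, (i : MMon n d)) ≠
            tkey V w mo (a i * coeffM (F i) m, (m : MMon n d)) := by
          intro he
          apply him
          simp only [tkey, EmbeddingLike.apply_eq_iff_eq, Prod.mk.injEq] at he
          exact Subtype.ext (Prod.ext he.2.1 he.2.2)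
        have h3 := lt_of_le_of_lt h1 (lt_of_le_of_ne h2 hne)
        simp only [tkey, Prod.Lex.toLex_lt_toLex, lt_irrefl, and_false, or_false, twt] at h3
        exact lt_of_add_lt_add_right h3)
  rw [← neg_eq_of_add_eq_zero_right hsum, v_neg] at hlt
  exact lt_irrefl _ hlt

/-- The finite set of module monomials of a given degree. -/
theorem exists_degree_finset (δ : ℕ) :
    ∃ S : Finset (MMon n d), ∀ m : MMon n d, m ∈ S ↔ m.1.degree = δ := by
  classical
  have hfin : {u : Fin n →₀ ℕ | u.degree = δ}.Finite := by
    apply (Finset.finite_toSet (Finset.univ.finsuppAntidiag δ : Finset (Fin n →₀ ℕ))).subset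
    intro u hu
    simp only [Finset.mem_coe, Finset.mem_finsuppAntidiag, Finset.subset_univ, and_true]
    rw [← hu.out, Finsupp.degree_eq_sum]
  refine ⟨hfin.toFinset ×ˢ Finset.univ, fun m => by simp⟩

end Helpers

/-- **Monomials outside the initial submodule form a basis of the quotient.**
Let `I` be a submodule of `K[x₁,…,xₙ]^d` generated by finitely many homogeneous elements and
let `B` be the set of module monomials `x^u·e_k` not belonging to `in_{w,≺}(I)`. Then the
residue classes of the elements of `B` form a `K`-vector space basis of `K[x₁,…,xₙ]^d / I`:
they are `K`-linearly independent and span the quotient over `K`. -/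
theorem monomial_basis_of_quotient {K : Type*} [Field K] {n d : ℕ}
    (V : ValOn K) (w : Fin n → ℝ) (mo : MonomialOrder (Fin n))
    (I : Submodule (MvPolynomial (Fin n) K) (Fin d → MvPolynomial (Fin n) K))
    (hgen : ∃ (s : ℕ) (g : Fin s → Fin d → MvPolynomial (Fin n) K),
      (∀ i, IsHomog (g i)) ∧ Submodule.span (MvPolynomial (Fin n) K) (Set.range g) = I)
    (B : Set (MMon n d))
    (hB : B = {m : MMon n d | termEl ((1 : K), m) ∉ inSub V.v w mo I}) :
    LinearIndependent K
      (fun m : B => Submodule.Quotient.mk (p := I) (termEl ((1 : K), (m : MMon n d)))) ∧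
    Submodule.span K
      (Set.range fun m : B =>
        (Submodule.Quotient.mk (p := I) (termEl ((1 : K), (m : MMon n d))))) = ⊤ := by
  classical
  obtain ⟨s, g, hg, rfl⟩ := hgen
  set I := Submodule.span (MvPolynomial (Fin n) K) (Set.range g) with hI
  have hBmem : ∀ m, m ∈ B ↔ ¬ ∃ f ∈ I, ∃ c, IsInit V.v w mo f (c, m) := by
    intro m
    rw [hB, Set.mem_setOf_eq, mem_inSub_iff]
  constructor
  · rw [linearIndependent_iff']
    intro s a ha
    have hmem : (∑ i ∈ s, a i • termEl ((1 : K), (i : MMon n d))) ∈ I := by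
      rw [← Submodule.Quotient.mk_eq_zero, ← ha]
      rw [← Submodule.mkQ_apply, map_sum]
      rfl
    have hco : ∀ m : MMon n d, coeffM (∑ i ∈ s, a i • termEl ((1 : K), (i : MMon n d))) m =
        ∑ i ∈ s, if (i : MMon n d) = m then a i else 0 := by
      intro m
      rw [coeffM_sum']
      refine Finset.sum_congr rfl fun i _ => ?_
      rw [coeffM_smulK, coeffM_termEl]
      simp
    have hzero : (∑ i ∈ s, a i • termEl ((1 : K), (i : MMon n d))) = 0 := by
      by_contra hne
      obtain ⟨⟨c, m⟩, ht⟩ := exists_isInit V w mo hne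
      have hc : coeffM _ m = c := ht.2.1
      have hc0 : c ≠ 0 := ht.1
      rw [hco] at hc
      rw [← hc] at hc0
      obtain ⟨i, -, hi⟩ := Finset.exists_ne_zero_of_sum_ne_zero hc0
      have him : (i : MMon n d) = m := by by_contra h; simp [h] at hi
      have := (hBmem m).1 (him ▸ i.2)
      exact this ⟨_, hmem, c, ht⟩
    intro i hi
    have := hco i
    rw [hzero] at this
    simp only [Subtype.coe_inj, Finset.sum_ite_eq', hi, if_true] at this
    rw [← this]
    simp [coeffM]
  · set Q := Submodule.span K
      (Set.range fun m : B =>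
        (Submodule.Quotient.mk (p := I) (termEl ((1 : K), (m : MMon n d))))) with hQ
    -- a family with prescribed initial monomials
    have hfam : ∀ m : MMon n d, ∃ (f : Fin d → MvPolynomial (Fin n) K) (c : K),
        IsInit V.v w mo f (c, m) ∧ (∀ m', coeffM f m' ≠ 0 → m'.1.degree = m.1.degree) ∧
        Submodule.Quotient.mk (p := I) f ∈ Q := by
      intro m
      by_cases hm : m ∈ B
      · refine ⟨_, 1, isInit_termEl V w mo m, ?_, Submodule.subset_span ⟨⟨m, hm⟩, rfl⟩⟩
        intro m' hm'
        rw [coeffM_termEl] at hm'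
        have : m = m' := by by_contra h; simp [h] at hm'
        rw [this]
      · rw [hBmem, not_not] at hm
        obtain ⟨f, hf, c, hc⟩ := hm
        refine ⟨_, c, hc.hcM, ?_, ?_⟩
        · intro m' hm'
          rw [coeffM_hcM] at hm'
          by_contra h
          simp [h] at hm'
        · rw [(Submodule.Quotient.mk_eq_zero I).2 (hcM_mem g hg hf _)]
          exact Submodule.zero_mem _
    choose F c hF hdeg hFQ using hfam
    have hmon : ∀ m : MMon n d, Submodule.Quotient.mk (p := I) (termEl ((1 : K), m)) ∈ Q := by
      intro m
      obtain ⟨S, hS⟩ := exists_degree_finset (n := n) (d := d) m.1.degree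
      have hli := indep_of_init V w mo S F c hF
      have htop := hli.span_eq_top_of_card_eq_finrank' (by simp)
      have hin : (fun m' : S => coeffM (termEl ((1 : K), m)) m') ∈
          Submodule.span K (Set.range (fun m : S => fun m' : S => coeffM (F m) m')) := by
        rw [htop]; trivial
      rw [Submodule.mem_span_range_iff_exists_fun] at hin
      obtain ⟨a, ha⟩ := hin
      have heq : termEl ((1 : K), m) = ∑ i : S, a i • F i := by
        apply coeffM_ext
        intro m'
        rw [coeffM_sum']
        by_cases hm' : m' ∈ S
        · have := congrFun ha ⟨m', hm'⟩
          simp only [Finset.sum_apply, Pi.smul_apply, smul_eq_mul] at this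
          rw [← this]
          exact Finset.sum_congr rfl fun i _ => (coeffM_smulK _ _ _).symm
        · rw [coeffM_termEl, if_neg (by rintro rfl; exact hm' ((hS _).2 rfl))]
          symm
          apply Finset.sum_eq_zero
          intro i _
          rw [coeffM_smulK]
          by_contra h0
          apply hm'
          rw [hS, hdeg i m' (right_ne_zero_of_mul h0)]
          exact (hS i).1 i.2
      rw [heq, ← Submodule.mkQ_apply, map_sum]
      exact Submodule.sum_mem _ fun i _ => Submodule.smul_mem Q (a i) (hFQ i)
    rw [eq_top_iff]
    intro x _
    obtain ⟨f, rfl⟩ := Submodule.Quotient.mk_surjective I x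
    have heq : f = ∑ m ∈ suppM f, coeffM f m • termEl ((1 : K), m) := by
      apply coeffM_ext
      intro m
      rw [coeffM_sum']
      simp only [coeffM_smulK, coeffM_termEl, mul_ite, mul_one, mul_zero, Finset.sum_ite_eq']
      split_ifs with h
      · rfl
      · by_contra h0
        exact h (mem_suppM h0)
    rw [heq, ← Submodule.mkQ_apply, map_sum]
    exact Submodule.sum_mem _ fun m _ => Submodule.smul_mem Q (coeffM f m) (hmon m)
end

section
/- Division theorem (normal form) for free modules over ℤ/p^ℓℤ[x₁,…,xₙ]: Let R = ℤ/p^ℓℤ, let f be a nonzero homogeneous element of R[x₁,…,xₙ]^d and let g₁,…,g_s be nonzero homogeneous elements of R[x₁,…,xₙ]^d. Then there exist polynomials h₁,…,h_s ∈ R[x₁,…,xₙ] and an element r ∈ R[x₁,…,xₙ]^d such that f = h₁g₁ + ⋯ + h_s g_s + r, such that in_{w,≺}(hᵢgᵢ) ≥ in_{w,≺}(f) in the term order for every i with hᵢgᵢ ≠ 0, such that in_{w,≺}(r) ≥ in_{w,≺}(f) in the term order if r ≠ 0, and such that no term of r is divisible by in_{w,≺}(gᵢ) for any i ∈ {1,…,s}.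 -/
open MvPolynomial

/-- The valuation-like map on `ℤ/p^ℓℤ` with values in `ℝ ∪ {∞}`: for nonzero `m`, the
`p`-adic valuation of the canonical representative `m.val`; `v(0) = ∞`. -/
noncomputable def zmodValR (p ℓ : ℕ) (m : ZMod (p ^ ℓ)) : WithTop ℝ :=
  if m = 0 then ⊤ else ((padicValNat p m.val : ℝ) : WithTop ℝ)

namespace DivZ

/-- the valuation as a natural number -/
noncomputable def V (p ℓ : ℕ) (c : ZMod (p ^ ℓ)) : ℕ := padicValNat p c.val

section val
variable {p ℓ : ℕ}

lemma neZero (hp : p.Prime) : NeZero (p ^ ℓ) := ⟨pow_ne_zero _ hp.ne_zero⟩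

lemma le_V (hp : p.Prime) {c : ZMod (p ^ ℓ)} (hc : c ≠ 0) {j : ℕ}
    (h : (p : ZMod (p ^ ℓ)) ^ j ∣ c) : j ≤ V p ℓ c := by
  have := neZero (ℓ := ℓ) hp
  have : Fact p.Prime := ⟨hp⟩
  have hj : j ≤ ℓ := by
    by_contra hlt
    apply hc
    have h0 : (p : ZMod (p ^ ℓ)) ^ j = 0 := by
      have : ((p ^ j : ℕ) : ZMod (p ^ ℓ)) = 0 :=
        (ZMod.natCast_eq_zero_iff _ _).2 (pow_dvd_pow p (by omega))
      exact_mod_cast this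
    rw [h0] at h
    exact zero_dvd_iff.1 h
  obtain ⟨x, hx⟩ := h
  have h1 : ((c.val : ℕ) : ZMod (p ^ ℓ)) = ((p ^ j * x.val : ℕ) : ZMod (p ^ ℓ)) := by
    push_cast
    rw [ZMod.natCast_zmod_val, ZMod.natCast_zmod_val, hx]
  rw [ZMod.natCast_eq_natCast_iff] at h1
  have h2 := h1.of_dvd (pow_dvd_pow p hj)
  have h3 : p ^ j ∣ c.val := (h2.dvd_iff dvd_rfl).2 (Dvd.intro _ rfl)
  have hv : c.val ≠ 0 := by rwa [Ne, ZMod.val_eq_zero]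
  exact (padicValNat_dvd_iff_le hv).1 h3

lemma exists_unit (hp : p.Prime) {c : ZMod (p ^ ℓ)} (hc : c ≠ 0) :
    Associated ((p : ZMod (p ^ ℓ)) ^ (V p ℓ c)) c := by
  have := neZero (ℓ := ℓ) hp
  have : Fact p.Prime := ⟨hp⟩
  have hv : c.val ≠ 0 := by rwa [Ne, ZMod.val_eq_zero]
  obtain ⟨k, hk⟩ : p ^ (V p ℓ c) ∣ c.val := pow_padicValNat_dvd
  have hk2 : ¬ p ∣ k := by
    rintro ⟨k', rfl⟩
    have h4 : p ^ (V p ℓ c + 1) ∣ c.val := by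
      rw [hk, pow_succ]; exact ⟨k', by ring⟩
    have := (padicValNat_dvd_iff_le hv).1 h4
    unfold V at this
    omega
  have hu : IsUnit (k : ZMod (p ^ ℓ)) := by
    rw [ZMod.isUnit_iff_coprime]
    exact (Nat.Coprime.pow_left _ ((Nat.Prime.coprime_iff_not_dvd hp).2 hk2)).symm
  obtain ⟨u, hu⟩ := hu
  refine ⟨u, ?_⟩
  rw [hu]
  have := congrArg (Nat.cast (R := ZMod (p ^ ℓ))) hk
  rw [ZMod.natCast_zmod_val] at this
  conv_rhs => rw [this]
  push_cast
  rfl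

lemma V_lt (hp : p.Prime) {c : ZMod (p ^ ℓ)} (hc : c ≠ 0) : V p ℓ c < ℓ := by
  by_contra h
  apply hc
  have h0 : (p : ZMod (p ^ ℓ)) ^ (V p ℓ c) = 0 := by
    have : ((p ^ (V p ℓ c) : ℕ) : ZMod (p ^ ℓ)) = 0 :=
      (ZMod.natCast_eq_zero_iff _ _).2 (pow_dvd_pow p (by omega))
    exact_mod_cast this
  have := exists_unit hp hc
  rw [h0] at this
  exact zero_dvd_iff.1 this.dvd

lemma V_mono (hp : p.Prime) {a b : ZMod (p ^ ℓ)} (hb : b ≠ 0) (h : a ∣ b) :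
    V p ℓ a ≤ V p ℓ b := by
  have ha : a ≠ 0 := by rintro rfl; exact hb (zero_dvd_iff.1 h)
  exact le_V hp hb ((exists_unit hp ha).dvd.trans h)

lemma V_dvd (hp : p.Prime) {a b : ZMod (p ^ ℓ)} (ha : a ≠ 0) (hb : b ≠ 0)
    (h : V p ℓ a ≤ V p ℓ b) : a ∣ b :=
  (exists_unit hp ha).symm.dvd.trans ((pow_dvd_pow _ h).trans (exists_unit hp hb).dvd)

lemma V_pow (hp : p.Prime) {j : ℕ} (h : (p : ZMod (p ^ ℓ)) ^ j ≠ 0) :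
    V p ℓ ((p : ZMod (p ^ ℓ)) ^ j) = j := by
  have := neZero (ℓ := ℓ) hp
  have : Fact p.Prime := ⟨hp⟩
  have hj : j < ℓ := by
    by_contra hlt
    apply h
    have : ((p ^ j : ℕ) : ZMod (p ^ ℓ)) = 0 :=
      (ZMod.natCast_eq_zero_iff _ _).2 (pow_dvd_pow p (by omega))
    exact_mod_cast this
  have h1 : ((p : ZMod (p ^ ℓ)) ^ j).val = p ^ j := by
    have := ZMod.val_natCast_of_lt (Nat.pow_lt_pow_right hp.one_lt hj)
    push_cast at this
    exact this
  rw [V, h1, padicValNat.prime_pow]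

lemma V_mul (hp : p.Prime) {a b : ZMod (p ^ ℓ)} (hab : a * b ≠ 0) :
    V p ℓ (a * b) = V p ℓ a + V p ℓ b := by
  have ha : a ≠ 0 := by rintro rfl; simp at hab
  have hb : b ≠ 0 := by rintro rfl; simp at hab
  have h := (exists_unit hp ha).mul_mul (exists_unit hp hb)
  rw [← pow_add] at h
  have h0 : (p : ZMod (p ^ ℓ)) ^ (V p ℓ a + V p ℓ b) ≠ 0 := by
    intro h0; rw [h0] at h; exact hab (zero_dvd_iff.1 h.dvd)
  have h2 := V_pow hp h0
  have := V_mono hp hab h.dvd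
  have := V_mono hp h0 h.symm.dvd
  omega

lemma V_add (hp : p.Prime) {a b : ZMod (p ^ ℓ)} (ha : a ≠ 0) (hb : b ≠ 0) (hab : a + b ≠ 0) :
    V p ℓ a ≤ V p ℓ (a + b) ∨ V p ℓ b ≤ V p ℓ (a + b) := by
  rcases le_total (V p ℓ a) (V p ℓ b) with h | h
  · exact Or.inl (V_mono hp hab (dvd_add dvd_rfl (V_dvd hp ha hb h)))
  · exact Or.inr (V_mono hp hab (dvd_add (V_dvd hp hb ha h) dvd_rfl))

end val

/-- sort keys of terms -/
abbrev Key (n d : ℕ) (mo : MonomialOrder (Fin n)) := ℝ ×ₗ (mo.syn ×ₗ Fin d)ᵒᵈ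

variable {p ℓ n d : ℕ} (w : Fin n → ℝ) (mo : MonomialOrder (Fin n))

/-- key attached to a valuation and a module monomial -/
noncomputable def key (v : ℕ) (m : MMon n d) : Key n d mo :=
  toLex ((v : ℝ) + wdot w m.1, OrderDual.toDual (toLex (mo.toSyn m.1, m.2)))

lemma key_le (v v' : ℕ) (m m' : MMon n d) :
    key w mo v m ≤ key w mo v' m' ↔
      ((v : ℝ) + wdot w m.1 < v' + wdot w m'.1 ∨
        ((v : ℝ) + wdot w m.1 = v' + wdot w m'.1 ∧ (mmLt mo m' m ∨ m = m'))) := by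
  unfold key
  rw [Prod.Lex.toLex_le_toLex, OrderDual.toDual_le_toDual, Prod.Lex.toLex_le_toLex]
  simp only [mmLt]
  apply or_congr Iff.rfl
  apply and_congr Iff.rfl
  rw [EmbeddingLike.apply_eq_iff_eq, or_assoc]
  apply or_congr Iff.rfl
  rw [le_iff_lt_or_eq, and_or_left]
  apply or_congr Iff.rfl
  rw [Prod.ext_iff]
  exact and_congr eq_comm eq_comm

lemma key_inj {v v' : ℕ} {m m' : MMon n d} (h : key w mo v m = key w mo v' m') : m = m' := by
  unfold key at h
  have h1 := congrArg (fun x => ofLex (OrderDual.ofDual (ofLex x).2)) h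
  simp only [ofLex_toLex, OrderDual.ofDual_toDual, Prod.mk.injEq,
    EmbeddingLike.apply_eq_iff_eq] at h1
  exact Prod.ext h1.1 h1.2

lemma key_mono {v v' : ℕ} (m : MMon n d) : key w mo v m ≤ key w mo v' m ↔ v ≤ v' := by
  rw [key_le]
  simp only [add_lt_add_iff_right, Nat.cast_lt, add_left_inj, Nat.cast_inj, or_true, and_true]
  omega

lemma wdot_add (u u' : Fin n →₀ ℕ) : wdot w (u + u') = wdot w u + wdot w u' := by
  simp [wdot, mul_add, Finset.sum_add_distrib]

lemma key_shift {v v' a : ℕ} {m m' : MMon n d} (u : Fin n →₀ ℕ)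
    (h : key w mo v m ≤ key w mo v' m') :
    key w mo (a + v) (u + m.1, m.2) ≤ key w mo (a + v') (u + m'.1, m'.2) := by
  rw [key_le] at h ⊢
  simp only [wdot_add]
  push_cast
  rcases h with h | ⟨h, h2⟩
  · left; linarith
  · right
    refine ⟨by linarith, ?_⟩
    rcases h2 with h2 | h2
    · left
      rcases h2 with h2 | h2
      · left; simpa using h2
      · right; exact ⟨by simp [h2.1], h2.2⟩
    · right; rw [h2]

lemma termLE_iff {c c' : ZMod (p ^ ℓ)} (hc : c ≠ 0) (hc' : c' ≠ 0) (m m' : MMon n d) :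
    termLE (zmodValR p ℓ) w mo (c, m) (c', m') ↔
      key w mo (V p ℓ c) m ≤ key w mo (V p ℓ c') m' := by
  rw [key_le]
  simp only [termLE, twt, zmodValR, hc, hc', if_false, V]
  norm_cast

/-- key of `F` at `m` -/
noncomputable def K (F : Fin d → MvPolynomial (Fin n) (ZMod (p ^ ℓ))) (m : MMon n d) :
    Key n d mo := key w mo (V p ℓ (coeffM F m)) m

/-- All terms of `F` have keys in `U`. -/
def In (F : Fin d → MvPolynomial (Fin n) (ZMod (p ^ ℓ))) (U : Set (Key n d mo)) : Prop :=
  ∀ m, coeffM F m ≠ 0 → K w mo F m ∈ U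

lemma coeffM_add (F G : Fin d → MvPolynomial (Fin n) (ZMod (p ^ ℓ))) (m : MMon n d) :
    coeffM (F + G) m = coeffM F m + coeffM G m := by simp [coeffM]

lemma coeffM_neg (F : Fin d → MvPolynomial (Fin n) (ZMod (p ^ ℓ))) (m : MMon n d) :
    coeffM (-F) m = - coeffM F m := by simp [coeffM]

lemma coeffM_ext {F G : Fin d → MvPolynomial (Fin n) (ZMod (p ^ ℓ))}
    (h : ∀ m, coeffM F m = coeffM G m) : F = G := by
  funext k; ext u; exact h (u, k)

lemma coeffM_mono (u : Fin n →₀ ℕ) (a : ZMod (p ^ ℓ))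
    (G : Fin d → MvPolynomial (Fin n) (ZMod (p ^ ℓ))) (m : MMon n d) :
    coeffM (monomial u a • G) m = if u ≤ m.1 then a * coeffM G (m.1 - u, m.2) else 0 := by
  simp [coeffM, coeff_monomial_mul']

lemma coeffM_termEl (t : Term (ZMod (p ^ ℓ)) n d) (m : MMon n d) :
    coeffM (termEl t) m = if m = t.2 then t.1 else 0 := by
  obtain ⟨c, u, k⟩ := t
  obtain ⟨u', k'⟩ := m
  simp only [coeffM, termEl, Prod.mk.injEq]
  by_cases hk : k' = k
  · subst hk
    simp [coeff_monomial, eq_comm]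
  · simp [hk]

lemma In_add (hp : p.Prime) {F G : Fin d → MvPolynomial (Fin n) (ZMod (p ^ ℓ))}
    {U : Set (Key n d mo)} (hU : IsUpperSet U) (hF : In w mo F U) (hG : In w mo G U) :
    In w mo (F + G) U := by
  intro m hm
  rw [coeffM_add] at hm
  unfold K
  rw [coeffM_add]
  by_cases h1 : coeffM F m = 0
  · rw [h1, zero_add] at hm ⊢; exact hG m hm
  by_cases h2 : coeffM G m = 0
  · rw [h2, add_zero] at hm ⊢; exact hF m hm
  rcases V_add hp h1 h2 hm with h | h
  · exact hU ((key_mono w mo m).2 h) (hF m h1)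
  · exact hU ((key_mono w mo m).2 h) (hG m h2)

lemma In_zero (U : Set (Key n d mo)) :
    In w mo (0 : Fin d → MvPolynomial (Fin n) (ZMod (p ^ ℓ))) U := by
  intro m hm; simp [coeffM] at hm

/-- homogeneous of degree `D` -/
def Hom (D : ℕ) (F : Fin d → MvPolynomial (Fin n) (ZMod (p ^ ℓ))) : Prop :=
  ∀ m, coeffM F m ≠ 0 → (∑ i, m.1 i) = D

/-- module monomials of degree `D` -/
noncomputable def mons (n d D : ℕ) : Finset (MMon n d) :=
  (Finset.finsuppAntidiag Finset.univ D) ×ˢ Finset.univ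

lemma mem_mons {D : ℕ} {m : MMon n d} : m ∈ mons n d D ↔ (∑ i, m.1 i) = D := by
  simp [mons]

/-- all keys that may occur -/
noncomputable def keys (ℓ d D : ℕ) : Set (Key n d mo) :=
  (fun x : ℕ × MMon n d => key w mo x.1 x.2) '' ((Finset.range ℓ ×ˢ mons n d D : Finset _) : Set _)

/-- keys above the initial term of `F` -/
def up (D : ℕ) (F : Fin d → MvPolynomial (Fin n) (ZMod (p ^ ℓ))) : Set (Key n d mo) :=
  {x | x ∈ keys w mo ℓ d D ∧ ∃ m, coeffM F m ≠ 0 ∧ K w mo F m ≤ x}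

lemma up_finite (D : ℕ) (F : Fin d → MvPolynomial (Fin n) (ZMod (p ^ ℓ))) :
    (up w mo D F).Finite :=
  ((Finset.finite_toSet _).image _).subset fun _ hx => hx.1

lemma up_lt (hp : p.Prime) {D : ℕ} {F F' : Fin d → MvPolynomial (Fin n) (ZMod (p ^ ℓ))}
    (hF : Hom D F) {m : MMon n d} (hm : coeffM F m ≠ 0)
    (h : In w mo F' (Set.Ioi (K w mo F m))) :
    (up w mo D F').ncard < (up w mo D F).ncard := by
  apply Set.ncard_lt_ncard _ (up_finite w mo D F)
  rw [Set.ssubset_iff_of_subset]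
  · refine ⟨K w mo F m, ⟨⟨(V p ℓ (coeffM F m), m), ?_, rfl⟩, m, hm, le_rfl⟩, ?_⟩
    · simp only [Finset.coe_product, Set.mem_prod, Finset.mem_coe, Finset.mem_range, mem_mons]
      exact ⟨V_lt hp hm, hF m hm⟩
    · rintro ⟨-, m', hm', hle⟩
      exact absurd (h m' hm') (not_lt.2 hle)
  · rintro x ⟨hx, m', hm', hle⟩
    exact ⟨hx, m, hm, ((h m' hm').le).trans hle⟩

lemma exists_init {D : ℕ} {F : Fin d → MvPolynomial (Fin n) (ZMod (p ^ ℓ))}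
    (hF : Hom D F) (h0 : F ≠ 0) :
    ∃ m, coeffM F m ≠ 0 ∧ In w mo F (Set.Ici (K w mo F m)) := by
  classical
  have hne : ((mons n d D).filter fun m => coeffM F m ≠ 0).Nonempty := by
    by_contra h
    apply h0
    apply coeffM_ext
    intro m
    by_contra hm
    apply h
    have hm' : coeffM F m ≠ 0 := by simpa [coeffM] using hm
    exact ⟨m, Finset.mem_filter.2 ⟨mem_mons.2 (hF m hm'), hm'⟩⟩
  obtain ⟨m, hm, hmin⟩ := Finset.exists_min_image _ (K w mo F) hne
  refine ⟨m, (Finset.mem_filter.1 hm).2, fun m' hm' => ?_⟩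
  exact hmin m' (Finset.mem_filter.2 ⟨mem_mons.2 (hF m' hm'), hm'⟩)

lemma In_Ioi {F : Fin d → MvPolynomial (Fin n) (ZMod (p ^ ℓ))} {m : MMon n d} {v : ℕ}
    (h : In w mo F (Set.Ici (key w mo v m))) (h0 : coeffM F m = 0) :
    In w mo F (Set.Ioi (key w mo v m)) := by
  intro m' hm'
  refine lt_of_le_of_ne (Set.mem_Ici.1 (h m' hm')) fun heq => ?_
  have := key_inj w mo heq
  subst this
  exact hm' h0

theorem main (hp : p.Prime) {s : ℕ} (g : Fin s → Fin d → MvPolynomial (Fin n) (ZMod (p ^ ℓ)))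
    (hghom : ∀ i, IsHomog (g i)) (D : ℕ) :
    ∀ (N : ℕ) (F : Fin d → MvPolynomial (Fin n) (ZMod (p ^ ℓ))), Hom D F →
      (up w mo D F).ncard = N →
    ∃ (h : Fin s → MvPolynomial (Fin n) (ZMod (p ^ ℓ)))
      (r : Fin d → MvPolynomial (Fin n) (ZMod (p ^ ℓ))),
      F = (∑ i, h i • g i) + r ∧
      (∀ U : Set (Key n d mo), IsUpperSet U → In w mo F U →
        (∀ i, In w mo (h i • g i) U) ∧ In w mo r U) ∧
      (∀ m : MMon n d, coeffM r m ≠ 0 → ∀ i, ∀ t : Term (ZMod (p ^ ℓ)) n d,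
        IsInit (zmodValR p ℓ) w mo (g i) t →
          ¬ (t.2.2 = m.2 ∧ t.1 ∣ coeffM r m ∧ t.2.1 ≤ m.1)) := by
  intro N
  induction N using Nat.strong_induction_on with
  | _ N ih =>
  intro F hF hN
  by_cases hF0 : F = 0
  · refine ⟨0, 0, by simp [hF0], fun U _ _ => ⟨fun i => ?_, In_zero w mo U⟩, ?_⟩
    · simpa using In_zero w mo U
    · intro m hm; simp [coeffM] at hm
  obtain ⟨m, hm, hmin⟩ := exists_init w mo hF hF0
  by_cases hdiv : ∃ i, ∃ t : Term (ZMod (p ^ ℓ)) n d, IsInit (zmodValR p ℓ) w mo (g i) t ∧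
      (t.2.2 = m.2 ∧ t.1 ∣ coeffM F m ∧ t.2.1 ≤ m.1)
  · obtain ⟨i, ⟨c0, u0, k0⟩, ⟨hc0, hc0', ht⟩, hk, ⟨a, ha⟩, hu⟩ := hdiv
    simp only at hc0 hc0' ht hk ha hu
    obtain ⟨u, hu'⟩ : ∃ u, m.1 = u + u0 := ⟨m.1 - u0, (tsub_add_cancel_of_le hu).symm⟩
    have hmeq : m = (u + u0, k0) := Prod.ext hu' hk.symm
    have hq : ∀ m', coeffM (monomial u a • g i) m' ≠ 0 → ∃ m'' : MMon n d,
        m' = (u + m''.1, m''.2) ∧ coeffM (g i) m'' ≠ 0 ∧ a * coeffM (g i) m'' ≠ 0 ∧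
        coeffM (monomial u a • g i) m' = a * coeffM (g i) m'' := by
      intro m' hm'
      rw [coeffM_mono] at hm' ⊢
      split_ifs at hm' with hle
      · rw [if_pos hle]
        refine ⟨(m'.1 - u, m'.2), Prod.ext (add_tsub_cancel_of_le hle).symm rfl, ?_, hm', rfl⟩
        exact right_ne_zero_of_mul hm'
      · exact absurd rfl hm'
    have hqIn : In w mo (monomial u a • g i) (Set.Ici (K w mo F m)) := by
      intro m' hm'
      obtain ⟨m'', e, h1, h2, h3⟩ := hq m' hm'
      have h4 := ht m'' h1
      rw [termLE_iff w mo hc0 h1] at h4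
      have h5 := key_shift w mo (a := V p ℓ a) u h4
      rw [Set.mem_Ici]
      unfold K
      rw [h3, V_mul hp h2, ha, mul_comm c0 a, V_mul hp (by rw [mul_comm, ← ha]; exact hm), hmeq, e]
      exact h5
    have hqm : coeffM (monomial u a • g i) m = coeffM F m := by
      rw [coeffM_mono, if_pos (by rw [hu']; exact le_self_add), ha, mul_comm, hmeq]
      congr 1
      rw [← hc0']
      simp
    have hnegIn : In w mo (-(monomial u a • g i)) (Set.Ici (K w mo F m)) := by
      rw [← neg_smul, ← map_neg]
      intro m' hm'
      have e : coeffM (monomial u (-a) • g i) m' = - coeffM (monomial u a • g i) m' := by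
        rw [map_neg, neg_smul, coeffM_neg]
      have h0 : coeffM (monomial u a • g i) m' ≠ 0 := by
        intro h; rw [e, h, neg_zero] at hm'; exact hm' rfl
      refine le_trans (hqIn m' h0) ((key_mono w mo m').2 (V_mono hp hm' ?_))
      rw [e]; exact (dvd_neg).2 dvd_rfl
    have hF'In : In w mo (F + -(monomial u a • g i)) (Set.Ioi (K w mo F m)) := by
      apply In_Ioi
      · exact In_add w mo hp (isUpperSet_Ici _) hmin hnegIn
      · rw [coeffM_add, coeffM_neg, hqm, add_neg_cancel]
    have hF'hom : Hom D (F + -(monomial u a • g i)) := by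
      intro m' hm'
      by_cases h1 : coeffM F m' = 0
      · rw [coeffM_add, coeffM_neg, h1, zero_add, neg_ne_zero] at hm'
        obtain ⟨m'', e, h1, h2, h3⟩ := hq m' hm'
        obtain ⟨δ, hδ⟩ := hghom i
        have e1 := hδ m'' h1
        have e2 := hδ (u0, k0) (by rw [hc0']; exact hc0)
        have e3 := hF m hm
        rw [hmeq] at e3
        rw [e]
        simp only [Finsupp.add_apply, Finset.sum_add_distrib] at e2 e3 ⊢
        omega
      · exact hF m' h1
    obtain ⟨h, r, hsum, hUp, hr⟩ := ih _ (hN ▸ up_lt w mo hp hF hm hF'In) _ hF'hom rfl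
    refine ⟨h + Pi.single i (monomial u a), r, ?_, ?_, hr⟩
    · have e1 : ∑ j, (h + Pi.single i (monomial u a) : Fin s → MvPolynomial (Fin n) (ZMod (p ^ ℓ))) j • g j
          = ∑ j, h j • g j + monomial u a • g i := by
        simp only [Pi.add_apply, add_smul, Finset.sum_add_distrib]
        congr 1
        rw [Finset.sum_eq_single i]
        · simp
        · intro j _ hj; simp [hj]
        · simp
      rw [e1]
      have : F = (F + -(monomial u a • g i)) + monomial u a • g i := by abel
      rw [this, hsum]
      abel
    · intro U hU hFU
      have hsub : Set.Ici (K w mo F m) ⊆ U := fun x hx => hU hx (hFU m hm)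
      obtain ⟨A, B⟩ := hUp U hU fun m' hm' => hsub (Set.Ioi_subset_Ici_self (hF'In m' hm'))
      refine ⟨fun j => ?_, B⟩
      rw [Pi.add_apply, add_smul]
      refine In_add w mo hp hU (A j) ?_
      by_cases hj : j = i
      · subst hj
        rw [Pi.single_eq_same]
        exact fun m' hm' => hsub (hqIn m' hm')
      · rw [Pi.single_eq_of_ne hj, zero_smul]
        exact In_zero w mo U
  · have hT : ∀ m', coeffM (F + -(termEl (coeffM F m, m))) m'
        = if m' = m then 0 else coeffM F m' := by
      intro m'
      rw [coeffM_add, coeffM_neg, coeffM_termEl]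
      split_ifs with h
      · simp only at h; subst h; simp
      · simp
    have hF'In : In w mo (F + -(termEl (coeffM F m, m))) (Set.Ioi (K w mo F m)) := by
      apply In_Ioi
      · intro m' hm'
        unfold K
        rw [hT] at hm' ⊢
        split_ifs at hm' ⊢ with h
        · exact absurd rfl hm'
        · exact hmin m' hm'
      · rw [hT, if_pos rfl]
    have hF'hom : Hom D (F + -(termEl (coeffM F m, m))) := by
      intro m' hm'
      rw [hT] at hm'
      split_ifs at hm' with h
      · exact absurd rfl hm'
      · exact hF m' hm'
    obtain ⟨h, r, hsum, hUp, hr⟩ := ih _ (hN ▸ up_lt w mo hp hF hm hF'In) _ hF'hom rfl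
    refine ⟨h, r + termEl (coeffM F m, m), ?_, ?_, ?_⟩
    · rw [← add_assoc, ← hsum]; abel
    · intro U hU hFU
      have hsub : Set.Ici (K w mo F m) ⊆ U := fun x hx => hU hx (hFU m hm)
      obtain ⟨A, B⟩ := hUp U hU fun m' hm' => hsub (Set.Ioi_subset_Ici_self (hF'In m' hm'))
      refine ⟨A, In_add w mo hp hU B ?_⟩
      intro m' hm'
      unfold K
      rw [coeffM_termEl] at hm' ⊢
      split_ifs at hm' ⊢ with h
      · simp only at h; subst h; exact hFU m' hm
      · exact absurd rfl hm'
    · intro m' hm' i t ht ⟨h1, h2, h3⟩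
      rw [coeffM_add, coeffM_termEl] at hm' h2
      simp only at hm' h2
      split_ifs at hm' h2 with h
      · subst h
        apply hdiv
        refine ⟨i, t, ht, h1, ?_, h3⟩
        by_cases h0 : coeffM r m' = 0
        · rwa [h0, zero_add] at h2
        · have h5 := (hUp _ (isUpperSet_Ioi _) hF'In).2 m' h0
          have h6 : ¬ V p ℓ (coeffM r m') ≤ V p ℓ (coeffM F m') := by
            rw [← key_mono w mo m']; exact not_le.2 h5
          have h7 : V p ℓ (coeffM r m' + coeffM F m') ≤ V p ℓ (coeffM F m') := by
            by_contra hc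
            have hd1 : ((p : ZMod (p ^ ℓ)) ^ (V p ℓ (coeffM F m') + 1)) ∣ coeffM r m' :=
              (pow_dvd_pow _ (by omega)).trans (exists_unit hp h0).dvd
            have hd2 : ((p : ZMod (p ^ ℓ)) ^ (V p ℓ (coeffM F m') + 1)) ∣
                coeffM r m' + coeffM F m' :=
              (pow_dvd_pow _ (by omega)).trans (exists_unit hp hm').dvd
            have := le_V hp hm ((dvd_add_right hd1).1 hd2)
            omega
          exact h2.trans (V_dvd hp hm' hm h7)
      · rw [add_zero] at hm' h2
        exact hr m' hm' i t ht ⟨h1, h2, h3⟩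

end DivZ

/-- **Division theorem (normal form) for free modules over `ℤ/p^ℓℤ[x₁,…,xₙ]`.**
Given a nonzero homogeneous `f` and nonzero homogeneous `g₁,…,g_s` in `R[x₁,…,xₙ]^d`
(`R = ℤ/p^ℓℤ`), there are `h₁,…,h_s ∈ R[x₁,…,xₙ]` and `r ∈ R[x₁,…,xₙ]^d` with
`f = Σ hᵢgᵢ + r`, `in_{w,≺}(hᵢgᵢ) ≥ in_{w,≺}(f)` whenever `hᵢgᵢ ≠ 0`,
`in_{w,≺}(r) ≥ in_{w,≺}(f)` if `r ≠ 0`, and no term of `r` divisible by any `in_{w,≺}(gᵢ)`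
(a term `c'·x^β·e_j` divides `c·x^α·e_i` iff `i = j`, `c' ∣ c` in `R` and `x^β ∣ x^α`). -/
theorem division_theorem_module_zmod {p ℓ : ℕ} (hp : p.Prime) (hℓ : 1 ≤ ℓ) {n d : ℕ}
    (w : Fin n → ℝ) (mo : MonomialOrder (Fin n)) {s : ℕ}
    (f : Fin d → MvPolynomial (Fin n) (ZMod (p ^ ℓ))) (hf : f ≠ 0) (hfhom : IsHomog f)
    (g : Fin s → Fin d → MvPolynomial (Fin n) (ZMod (p ^ ℓ)))
    (hg : ∀ i, g i ≠ 0) (hghom : ∀ i, IsHomog (g i)) :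
    ∃ (h : Fin s → MvPolynomial (Fin n) (ZMod (p ^ ℓ)))
      (r : Fin d → MvPolynomial (Fin n) (ZMod (p ^ ℓ))),
      f = (∑ i, h i • g i) + r ∧
      (∀ i, h i • g i ≠ 0 → ∀ t t' : Term (ZMod (p ^ ℓ)) n d,
        IsInit (zmodValR p ℓ) w mo f t → IsInit (zmodValR p ℓ) w mo (h i • g i) t' →
          termLE (zmodValR p ℓ) w mo t t') ∧
      (r ≠ 0 → ∀ t t' : Term (ZMod (p ^ ℓ)) n d,
        IsInit (zmodValR p ℓ) w mo f t → IsInit (zmodValR p ℓ) w mo r t' →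
          termLE (zmodValR p ℓ) w mo t t') ∧
      (∀ m : MMon n d, coeffM r m ≠ 0 → ∀ i, ∀ t : Term (ZMod (p ^ ℓ)) n d,
        IsInit (zmodValR p ℓ) w mo (g i) t →
          ¬ (t.2.2 = m.2 ∧ t.1 ∣ coeffM r m ∧ t.2.1 ≤ m.1)) := by
  obtain ⟨D, hD⟩ := hfhom
  obtain ⟨h, r, hsum, hUp, hr⟩ := DivZ.main w mo hp g hghom D _ f hD rfl
  have key : ∀ (G : Fin d → MvPolynomial (Fin n) (ZMod (p ^ ℓ))),
      (∀ U : Set (DivZ.Key n d mo), IsUpperSet U → DivZ.In w mo f U → DivZ.In w mo G U) →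
      ∀ t t' : Term (ZMod (p ^ ℓ)) n d, IsInit (zmodValR p ℓ) w mo f t →
        IsInit (zmodValR p ℓ) w mo G t' → termLE (zmodValR p ℓ) w mo t t' := by
    rintro G hG ⟨c, m⟩ ⟨c', m'⟩ ⟨h1, h2, h3⟩ ⟨h1', h2', h3'⟩
    simp only at h1 h2 h3 h1' h2' h3'
    rw [DivZ.termLE_iff w mo h1 h1']
    have := hG (Set.Ici (DivZ.key w mo (DivZ.V p ℓ c) m)) (isUpperSet_Ici _)
      (fun m1 hm1 => (DivZ.termLE_iff w mo h1 hm1 _ _).1 (h3 m1 hm1)) m' (by rw [h2']; exact h1')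
    unfold DivZ.K at this
    rw [h2'] at this
    exact this
  exact ⟨h, r, hsum, fun i _ => key _ fun U hU hf => (hUp U hU hf).1 i,
    fun _ => key _ fun U hU hf => (hUp U hU hf).2, hr⟩
end
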